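/- arXiv:1205.4803 — 3 statements merged into one kernel-verified Lean document; each statement's English description precedes it below -/
import Mathlib

section
/- Define g(τ) = η(2τ)³η(6τ)³. For every τ in the complex upper half-plane, with q = e^{2πiτ}, the identity g(τ) + 8·g(4τ) = Σ_{m,n∈ℤ} [ ((m² − 12n²)/2) · q^{m²+12n²} + ((4n² − 3m²)/2) · q^{3m²+4n²} ] holds, where the double series converges absolutely. -/
/-!
Jacobi's identity for the cube of the Euler product, in the form
`∏ (1 - qⁿ)³ = ∑_{k ∈ ℤ} (4k + 1) q^{k(2k + 1)}` (`summable_jacobi`), turns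
`g(τ) = q ∏ (1 - q²ⁿ)³ (1 - q⁶ⁿ)³` into a sum of `a b q^{(a² + 3b²)/4}` over `a, b ≡ 1 (mod 4)`.
Multiplying the Eisenstein integer `(a + b√-3)/2` by a cube root of unity moves it to
`m + n√-3` with `m + n` odd, and `a b` becomes `m² - 2mn - 3n²`; the cross term cancels under
`n ↦ -n`. Hence (`two_mul_cubeProd`)
  `2 g(q) = ∑_{m + n odd} (m² - 3n²) q^{m² + 3n²}`.
The sum over `m + n` even is a sum of `β² q^{4 N(β)}` over all Eisenstein integers `β`, up to a
factor, and vanishes because of the action of the cube roots of unity (`tsum_even_eq_zero`); so the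
parity condition may be dropped (`tsum_all_eq_odd`).

The two parts of the double series are half the sums of `(m² - 3n²) q^{m² + 3n²}` over `n` even and
over `m` even. Together they give half the sum over `m + n` odd, which is `g(q)`, plus the sum over
`m, n` both even, which is `4` times the full series at `q⁴`, that is `8 g(q⁴)`
(`theta_identity`).

Jacobi's identity itself comes from the finite form of the triple product
`∏_{k=1}^{n} (1 + z qᵏ) ∏_{k=0}^{n} (1 + z⁻¹ qᵏ) = ∑_j c_n(j) zʲ`. Passing from `n` to `n + 1`
multiplies by `(1 + z q^{n+1})(1 + z⁻¹ q^{n+1})`, which is a three-term recurrence for `c_n(j)`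
(`jacCoeff_succ`). At `z = -1` the product vanishes, and the recurrence shows that its derivative,
`∑_j j (-1)ʲ c_n(j)` up to sign, equals `∏_{k ≤ n} (1 - qᵏ)²` (`tsum_jacCoeff`). Tannery's theorem
gives the limit `n → ∞` (`jacobi_tri`).
-/


/-- The Dedekind eta function `η(τ) = q^{1/24} ∏_{n ≥ 1} (1 - qⁿ)`, `q = e^{2πiτ}`. -/
noncomputable def dedekindEta (τ : ℂ) : ℂ :=
  Complex.exp (2 * (Real.pi : ℂ) * Complex.I * τ / 24) *
    ∏' n : ℕ, (1 - Complex.exp (2 * (Real.pi : ℂ) * Complex.I * τ) ^ (n + 1))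

/-- The CM newform `g(τ) = η(2τ)³η(6τ)³`. -/
noncomputable def gForm (τ : ℂ) : ℂ := dedekindEta (2 * τ) ^ 3 * dedekindEta (6 * τ) ^ 3

open Filter Topology

/-! ### Splitting sums -/

/-- A summable family is summed by splitting its index set into two injectively parametrised
pieces. -/
lemma tsum_split {ι α β : Type*} {f : ι → ℂ} (hf : Summable f) (i : α → ι) (j : β → ι)
    (hi : Function.Injective i) (hj : Function.Injective j) (hd : ∀ a b, i a ≠ j b)
    (hc : ∀ p, (∃ a, i a = p) ∨ ∃ b, j b = p) :
    ∑' p, f p = ∑' a, f (i a) + ∑' b, f (j b) := by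
  have h : IsCompl (Set.range i) (Set.range j) := by
    refine ⟨Set.disjoint_left.2 ?_, codisjoint_iff.2 (Set.eq_univ_of_forall hc)⟩
    rintro _ ⟨a, rfl⟩ ⟨b, hb⟩
    exact hd a b hb.symm
  exact ((hi.hasSum_range_iff.2 (hf.comp_injective hi).hasSum).add_isCompl h
    (hj.hasSum_range_iff.2 (hf.comp_injective hj).hasSum)).tsum_eq

/-! ### Jacobi's identity -/

/-- The finite Euler product `(q)_n = ∏_{k=1}^{n} (1 - qᵏ)`. -/
noncomputable def qPoch (q : ℂ) (n : ℕ) : ℂ := ∏ k ∈ Finset.range n, (1 - q ^ (k + 1))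

/-- The reciprocal `1 / (q)_m`, extended by `0` to negative `m`: with this convention the recursion
`1 / (q)_{m-1} = (1 - qᵐ) / (q)_m` holds for every integer `m`. -/
noncomputable def qPochInv (q : ℂ) (m : ℤ) : ℂ := if m < 0 then 0 else (qPoch q m.toNat)⁻¹

/-- The triangular number `j (j + 1) / 2` of an integer `j`; the division is exact. -/
def tri (j : ℤ) : ℤ := j * (j + 1) / 2

lemma two_mul_tri (j : ℤ) : 2 * tri j = j * (j + 1) :=
  Int.mul_ediv_cancel' (Int.even_mul_succ_self j).two_dvd

lemma tri_sub_one (j : ℤ) : tri (j - 1) = tri j - j := by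
  have h1 := two_mul_tri j
  have h2 := two_mul_tri (j - 1)
  linarith

lemma tri_add_one (j : ℤ) : tri (j + 1) = tri j + (j + 1) := by
  have h1 := two_mul_tri j
  have h2 := two_mul_tri (j + 1)
  linarith

lemma natAbs_le_tri (j : ℤ) : (j.natAbs : ℤ) ≤ tri j + 1 := by
  have h1 := two_mul_tri j
  rcases le_total 0 j with h | h
  · rw [Int.natAbs_of_nonneg h]; nlinarith [sq_nonneg (j - 1)]
  · rw [Int.ofNat_natAbs_of_nonpos h]
    rcases eq_or_lt_of_le h with h | h
    · subst h; simp [tri]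
    · nlinarith [mul_nonneg (show 0 ≤ -j - 1 by lia) (show 0 ≤ -j - 1 by lia),
        mul_nonneg (show 0 ≤ -j - 1 by lia) (show 0 ≤ -j  by lia)]

section
variable {q : ℂ}

lemma one_sub_pow_succ_ne_zero (hq : ‖q‖ < 1) (k : ℕ) : 1 - q ^ (k + 1) ≠ 0 := by
  intro h
  have h1 : ‖q ^ (k + 1)‖ = 1 := by rw [← sub_eq_zero.1 h]; simp
  rw [norm_pow] at h1
  exact absurd h1 (pow_lt_one₀ (norm_nonneg _) hq (by lia)).ne

lemma qPoch_ne_zero (hq : ‖q‖ < 1) (n : ℕ) : qPoch q n ≠ 0 :=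
  Finset.prod_ne_zero_iff.2 fun k _ => one_sub_pow_succ_ne_zero hq k

lemma qPochInv_of_neg {m : ℤ} (hm : m < 0) : qPochInv q m = 0 := if_pos hm

lemma qPochInv_natCast (n : ℕ) : qPochInv q n = (qPoch q n)⁻¹ := by simp [qPochInv]

lemma qPochInv_sub_one (hq : ‖q‖ < 1) (m : ℤ) :
    qPochInv q (m - 1) = (1 - q ^ m) * qPochInv q m := by
  rcases lt_trichotomy m 0 with h | h | h
  · rw [qPochInv_of_neg h, qPochInv_of_neg (by lia), mul_zero]
  · subst h; simp [qPochInv]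
  · obtain ⟨n, rfl⟩ : ∃ n : ℕ, m = (n + 1 : ℕ) := ⟨(m - 1).toNat, by lia⟩
    have : ((n + 1 : ℕ) : ℤ) - 1 = (n : ℕ) := by lia
    rw [this, qPochInv_natCast, qPochInv_natCast, zpow_natCast]
    have h1 := qPoch_ne_zero hq n
    have h2 := one_sub_pow_succ_ne_zero hq n
    rw [qPoch, qPoch, Finset.prod_range_succ, ← qPoch]
    field_simp

/-- The coefficient `c_n(j) = q^{j(j+1)/2} (q)_{2n+1} / ((q)_{n-j} (q)_{n+1+j})` of `zʲ` in
`∏_{k=1}^{n} (1 + z qᵏ) ∏_{k=0}^{n} (1 + z⁻¹ qᵏ)`; it is `0` unless `-n - 1 ≤ j ≤ n`. -/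
noncomputable def jacCoeff (q : ℂ) (n : ℕ) (j : ℤ) : ℂ :=
  qPoch q (2 * n + 1) * q ^ tri j * qPochInv q (n - j) * qPochInv q (n + 1 + j)

/-- Comparison of coefficients in the multiplication of the finite triple product by
`(1 + z q^{n+1})(1 + z⁻¹ q^{n+1}) = 1 + q^{2n+2} + q^{n+1} (z + z⁻¹)`. -/
lemma jacCoeff_succ (hq : ‖q‖ < 1) (h0 : q ≠ 0) (n : ℕ) (j : ℤ) :
    jacCoeff q (n + 1) j = (1 + q ^ (2 * n + 2)) * jacCoeff q n j +
      q ^ (n + 1) * (jacCoeff q n (j - 1) + jacCoeff q n (j + 1)) := by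
  have a1 : qPochInv q (n - j) = (1 - q ^ ((n : ℤ) - j) * q) * qPochInv q (n + 1 - j) := by
    rw [← zpow_add_one₀ h0, show (n : ℤ) - j + 1 = n + 1 - j by ring,
      ← qPochInv_sub_one hq]
    congr 1; ring
  have a2 : qPochInv q (n - (j + 1)) = (1 - q ^ ((n : ℤ) - j)) * qPochInv q (n - j) := by
    rw [← qPochInv_sub_one hq]; congr 1; ring
  have b1 : qPochInv q (n + 1 + j) =
      (1 - q ^ ((n : ℤ) + 1 + j) * q) * qPochInv q (n + 1 + 1 + j) := by
    rw [← zpow_add_one₀ h0, show (n : ℤ) + 1 + j + 1 = n + 1 + 1 + j by ring,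
      ← qPochInv_sub_one hq]
    congr 1; ring
  have b2 : qPochInv q (n + 1 + (j - 1)) =
      (1 - q ^ ((n : ℤ) + 1 + j)) * qPochInv q (n + 1 + j) := by
    rw [← qPochInv_sub_one hq]; congr 1; ring
  have a3 : qPochInv q (n - (j - 1)) = qPochInv q (n + 1 - j) := by congr 1; ring
  have b3 : qPochInv q (n + 1 + (j + 1)) = qPochInv q (n + 1 + 1 + j) := by congr 1; ring
  -- With `X = q^{n-j}` and `Y = q^{n+1+j}`, everything is a polynomial in `X`, `Y` and `q`.
  have t1 : q ^ (n + 1) * q ^ tri (j - 1) = q ^ tri j * (q ^ ((n : ℤ) - j) * q) := by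
    rw [← zpow_natCast q (n + 1), ← zpow_add_one₀ h0, ← zpow_add₀ h0, ← zpow_add₀ h0,
      tri_sub_one]
    congr 1; push_cast; ring
  have t2 : q ^ (n + 1) * q ^ tri (j + 1) = q ^ tri j * (q ^ ((n : ℤ) + 1 + j) * q) := by
    rw [← zpow_natCast q (n + 1), ← zpow_add_one₀ h0, ← zpow_add₀ h0, ← zpow_add₀ h0,
      tri_add_one]
    congr 1; push_cast; ring
  have xy : q ^ (2 * n + 1) = q ^ ((n : ℤ) - j) * q ^ ((n : ℤ) + 1 + j) := by
    rw [← zpow_natCast, ← zpow_add₀ h0]; congr 1; push_cast; ring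
  have p : qPoch q (2 * (n + 1) + 1) =
      qPoch q (2 * n + 1) * (1 - q ^ (2 * n + 1) * q) * (1 - q ^ (2 * n + 1) * q * q) := by
    rw [qPoch, show 2 * (n + 1) + 1 = 2 * n + 1 + 1 + 1 by ring, Finset.prod_range_succ,
      Finset.prod_range_succ, ← qPoch]
    ring
  have x2 : q ^ (2 * n + 2) = q ^ (2 * n + 1) * q := pow_succ _ _
  simp only [jacCoeff]
  rw [p, a2, b2, a3, b3, x2]
  push_cast
  rw [a1, b1, xy]
  generalize q ^ tri (j - 1) = u at *
  generalize q ^ tri (j + 1) = v at *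
  generalize q ^ tri j = t at *
  generalize q ^ ((n : ℤ) - j) = X at *
  generalize q ^ ((n : ℤ) + 1 + j) = Y at *
  generalize qPochInv q (n + 1 - j) = A at *
  generalize qPochInv q (n + 1 + 1 + j) = B at *
  generalize qPoch q (2 * n + 1) = P at *
  generalize q ^ (n + 1) = z at *
  linear_combination (-(P * A * B * (1 - Y) * (1 - Y * q))) * t1 -
    (P * A * B * (1 - X) * (1 - X * q)) * t2

lemma jacCoeff_eq_zero {n : ℕ} {j : ℤ} (h : j ∉ Finset.Icc (-(n : ℤ) - 1) n) :
    jacCoeff q n j = 0 := by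
  rw [Finset.mem_Icc, not_and_or] at h
  rcases h with h | h
  · rw [jacCoeff, qPochInv_of_neg (m := n + 1 + j) (by lia), mul_zero]
  · rw [jacCoeff, qPochInv_of_neg (m := n - j) (by lia), mul_zero, zero_mul]

/-- The derivative at `z = -1` of the finite triple product. The recurrence for `c_n(j)` multiplies
this sum by `1 + q^{2n+2} - 2 q^{n+1} = (1 - q^{n+1})²`. -/
lemma tsum_jacCoeff (hq : ‖q‖ < 1) (h0 : q ≠ 0) (n : ℕ) :
    ∑' j : ℤ, (j : ℂ) * (-1) ^ j * jacCoeff q n j = qPoch q n ^ 2 := by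
  have hs : ∀ (n : ℕ) (u : ℤ → ℂ), Summable fun j => u j * jacCoeff q n j := fun n u =>
    summable_of_ne_finset_zero (s := Finset.Icc (-(n : ℤ) - 1) n) fun j hj => by
      rw [jacCoeff_eq_zero hj, mul_zero]
  induction n with
  | zero =>
    rw [tsum_eq_sum (s := Finset.Icc (-((0 : ℕ) : ℤ) - 1) (0 : ℕ)) fun j hj => by
      rw [jacCoeff_eq_zero hj, mul_zero]]
    rw [show Finset.Icc (-((0 : ℕ) : ℤ) - 1) (0 : ℕ) = {-1, 0} by rfl]
    have := one_sub_pow_succ_ne_zero hq 0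
    rw [zero_add, pow_one] at this
    simp [jacCoeff, qPoch, qPochInv, tri, this]
  | succ n ih =>
    have e1 : ∑' j : ℤ, (j : ℂ) * (-1) ^ j * jacCoeff q n (j - 1) =
        ∑' j : ℤ, (-(j + 1) * (-1) ^ j) * jacCoeff q n j := by
      rw [← (Equiv.addRight (1 : ℤ)).tsum_eq]
      refine tsum_congr fun j => ?_
      simp only [Equiv.coe_addRight, add_sub_cancel_right]
      rw [zpow_add_one₀ (by norm_num)]; push_cast; ring
    have e2 : ∑' j : ℤ, (j : ℂ) * (-1) ^ j * jacCoeff q n (j + 1) =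
        ∑' j : ℤ, (-(j - 1) * (-1) ^ j) * jacCoeff q n j := by
      rw [← (Equiv.subRight (1 : ℤ)).tsum_eq]
      refine tsum_congr fun j => ?_
      simp only [Equiv.subRight_apply, sub_add_cancel]
      rw [zpow_sub_one₀ (by norm_num)]; push_cast; ring
    have s1 : Summable fun j : ℤ => (j : ℂ) * (-1) ^ j * jacCoeff q n (j - 1) := by
      rw [← (Equiv.addRight (1 : ℤ)).summable_iff]
      refine (hs n fun j => ((j + 1 : ℤ) : ℂ) * (-1) ^ (j + 1)).congr fun j => ?_
      simp
    have s2 : Summable fun j : ℤ => (j : ℂ) * (-1) ^ j * jacCoeff q n (j + 1) := by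
      rw [← (Equiv.subRight (1 : ℤ)).summable_iff]
      refine (hs n fun j => ((j - 1 : ℤ) : ℂ) * (-1) ^ (j - 1)).congr fun j => ?_
      simp
    have e : ∀ j : ℤ, (j : ℂ) * (-1) ^ j * jacCoeff q (n + 1) j =
        (1 + q ^ (2 * n + 2)) * ((j : ℂ) * (-1) ^ j * jacCoeff q n j) +
        (q ^ (n + 1) * ((j : ℂ) * (-1) ^ j * jacCoeff q n (j - 1)) +
         q ^ (n + 1) * ((j : ℂ) * (-1) ^ j * jacCoeff q n (j + 1))) := fun j => by
      rw [jacCoeff_succ hq h0]; ring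
    rw [tsum_congr e, Summable.tsum_add ((hs n _).mul_left _) ((s1.mul_left _).add (s2.mul_left _)),
      Summable.tsum_add (s1.mul_left _) (s2.mul_left _), tsum_mul_left, tsum_mul_left,
      tsum_mul_left, ← mul_add, e1, e2, ← Summable.tsum_add (hs n _) (hs n _)]
    have e3 : ∑' j : ℤ, (-((j : ℂ) + 1) * (-1) ^ j * jacCoeff q n j +
        -((j : ℂ) - 1) * (-1) ^ j * jacCoeff q n j) =
        (-2) * ∑' j : ℤ, (j : ℂ) * (-1) ^ j * jacCoeff q n j := by
      rw [← tsum_mul_left]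
      exact tsum_congr fun j => by ring
    rw [e3, ih, show qPoch q (n + 1) = qPoch q n * (1 - q ^ (n + 1)) from
      Finset.prod_range_succ _ _]
    ring

lemma summable_int_pow {r : ℝ} (hr0 : 0 ≤ r) (hr1 : r < 1) (k : ℕ) :
    Summable fun m : ℤ => (m.natAbs : ℝ) ^ k * r ^ m.natAbs := by
  have h := summable_pow_mul_geometric_of_norm_lt_one k
    (r := r) (by rwa [Real.norm_of_nonneg hr0])
  exact Summable.of_nat_of_neg (by simpa using h) (by simpa using h)

lemma tendsto_qPoch (hq : ‖q‖ < 1) :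
    Tendsto (qPoch q) atTop (𝓝 (∏' n : ℕ, (1 - q ^ (n + 1)))) :=
  (ModularForm.multipliable_one_sub_pow hq).hasProd.tendsto_prod_nat

lemma tprod_one_sub_pow_ne_zero (hq : ‖q‖ < 1) : ∏' n : ℕ, (1 - q ^ (n + 1)) ≠ 0 := by
  have := tprod_one_add_ne_zero_of_summable (f := fun n : ℕ => -q ^ (n + 1))
    (fun i => by simpa [← sub_eq_add_neg] using one_sub_pow_succ_ne_zero hq i)
    (by simpa using (summable_nat_add_iff 1).mpr (summable_geometric_of_lt_one (norm_nonneg _) hq))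
  simpa [← sub_eq_add_neg] using this

lemma norm_theta_le (h0 : q ≠ 0) (hq : ‖q‖ < 1) (j : ℤ) :
    ‖(j : ℂ) * (-1) ^ j * q ^ tri j‖ ≤ ‖q‖⁻¹ * ((j.natAbs : ℝ) ^ 1 * ‖q‖ ^ j.natAbs) := by
  have hn : 0 < ‖q‖ := norm_pos_iff.2 h0
  have h : ‖q‖ ^ tri j ≤ ‖q‖⁻¹ * ‖q‖ ^ j.natAbs := by
    rw [mul_comm, ← zpow_natCast, ← zpow_sub_one₀ hn.ne']
    exact zpow_le_zpow_right_of_le_one₀ hn hq.le (by linarith [natAbs_le_tri j])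
  rw [norm_mul, norm_mul, norm_zpow, norm_zpow, norm_neg, norm_one, one_zpow, mul_one,
    pow_one, Complex.norm_intCast, Nat.cast_natAbs, Int.cast_abs]
  calc _ ≤ |(j : ℝ)| * (‖q‖⁻¹ * ‖q‖ ^ j.natAbs) := by gcongr
    _ = _ := by ring

lemma summable_theta (h0 : q ≠ 0) (hq : ‖q‖ < 1) :
    Summable fun j : ℤ => (j : ℂ) * (-1) ^ j * q ^ tri j :=
  .of_norm_bounded ((summable_int_pow (norm_nonneg q) hq 1).mul_left _) (norm_theta_le h0 hq)

lemma tendsto_qPochInv (hq : ‖q‖ < 1) :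
    Tendsto (qPochInv q) atTop (𝓝 (∏' n : ℕ, (1 - q ^ (n + 1)))⁻¹) := by
  have h := ((tendsto_qPoch hq).inv₀ (tprod_one_sub_pow_ne_zero hq)).comp
    (tendsto_atTop_atTop.2 fun b => ⟨(b : ℤ), fun a ha => by lia⟩ :
      Tendsto Int.toNat atTop atTop)
  refine h.congr' ?_
  filter_upwards [eventually_ge_atTop 0] with m hm
  simp [qPochInv, not_lt.2 hm]

lemma qPochInv_bound (hq : ‖q‖ < 1) : ∃ C, ∀ m, ‖qPochInv q m‖ ≤ C := by
  obtain ⟨C, hC⟩ := (Metric.isBounded_range_of_tendsto _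
    ((tendsto_qPoch hq).inv₀ (tprod_one_sub_pow_ne_zero hq))).exists_norm_le
  refine ⟨C, fun m => ?_⟩
  rcases lt_or_ge m 0 with h | h
  · rw [qPochInv_of_neg h, norm_zero]
    exact (norm_nonneg _).trans (hC _ ⟨0, rfl⟩)
  · lift m to ℕ using h
    rw [qPochInv_natCast]
    exact hC _ ⟨m, rfl⟩

/-- Jacobi's identity, with the terms of index `j` and `-1 - j` not yet combined. -/
lemma jacobi_tri (h0 : q ≠ 0) (hq : ‖q‖ < 1) :
    ∑' j : ℤ, (j : ℂ) * (-1) ^ j * q ^ tri j = (∏' n : ℕ, (1 - q ^ (n + 1))) ^ 3 := by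
  set Q := ∏' n : ℕ, (1 - q ^ (n + 1)) with hQ
  have hQ0 : Q ≠ 0 := tprod_one_sub_pow_ne_zero hq
  obtain ⟨A, hA⟩ := (Metric.isBounded_range_of_tendsto _ (tendsto_qPoch hq)).exists_norm_le
  obtain ⟨C, hC⟩ := qPochInv_bound hq
  have hA' : ∀ n, ‖qPoch q n‖ ≤ A := fun n => hA _ ⟨n, rfl⟩
  have hA0 : 0 ≤ A := (norm_nonneg _).trans (hA' 0)
  have hC0 : 0 ≤ C := (norm_nonneg _).trans (hC 0)
  -- Termwise `c_n(j) → q^{j(j+1)/2} / Q`, dominated because `(q)_n` and its inverse are bounded.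
  have lim : Tendsto (fun n : ℕ => ∑' j : ℤ, (j : ℂ) * (-1) ^ j * jacCoeff q n j) atTop
      (𝓝 (∑' j : ℤ, (j : ℂ) * (-1) ^ j * (Q * q ^ tri j * Q⁻¹ * Q⁻¹))) := by
    refine tendsto_tsum_of_dominated_convergence
      (bound := fun j : ℤ => (‖q‖⁻¹ * ((j.natAbs : ℝ) ^ 1 * ‖q‖ ^ j.natAbs)) * (A * C * C))
      (((summable_int_pow (norm_nonneg q) hq 1).mul_left _).mul_right _) (fun j => ?_)
      (.of_forall fun n j => ?_)
    · refine tendsto_const_nhds.mul (((Tendsto.mul ?_ tendsto_const_nhds).mul ?_).mul ?_)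
      · exact (tendsto_qPoch hq).comp (tendsto_atTop_atTop.2 fun b => ⟨b, fun a ha => by lia⟩)
      · exact (tendsto_qPochInv hq).comp
          (tendsto_atTop_atTop.2 fun b => ⟨(b + j).toNat, fun a ha => by lia⟩)
      · exact (tendsto_qPochInv hq).comp
          (tendsto_atTop_atTop.2 fun b => ⟨(b - 1 - j).toNat, fun a ha => by lia⟩)
    · rw [show (j : ℂ) * (-1) ^ j * jacCoeff q n j = ((j : ℂ) * (-1) ^ j * q ^ tri j) *
        (qPoch q (2 * n + 1) * qPochInv q (n - j) * qPochInv q (n + 1 + j)) by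
          rw [jacCoeff]; ring, norm_mul]
      refine mul_le_mul (norm_theta_le h0 hq j) ?_ (norm_nonneg _) (by positivity)
      rw [norm_mul, norm_mul]
      gcongr
      · exact hA' _
      · exact hC _
      · exact hC _
  simp_rw [tsum_jacCoeff hq h0] at lim
  have key := tendsto_nhds_unique lim ((tendsto_qPoch hq).pow 2)
  have e : ∑' j : ℤ, (j : ℂ) * (-1) ^ j * (Q * q ^ tri j * Q⁻¹ * Q⁻¹) =
      (∑' j : ℤ, (j : ℂ) * (-1) ^ j * q ^ tri j) * Q⁻¹ := by
    rw [← tsum_mul_right]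
    exact tsum_congr fun j => by field_simp
  rw [e, ← hQ] at key
  rw [pow_succ, ← key]
  field_simp

/-- Jacobi's identity indexed by the odd numbers `4k + 1`, which combine the indices `j = 2k` and
`j = -1 - 2k`. -/
lemma summable_jacobi (h0 : q ≠ 0) (hq : ‖q‖ < 1) :
    Summable (fun k : ℤ => (4 * (k : ℂ) + 1) * q ^ (k * (2 * k + 1))) ∧
    ∑' k : ℤ, (4 * (k : ℂ) + 1) * q ^ (k * (2 * k + 1)) = (∏' n : ℕ, (1 - q ^ (n + 1))) ^ 3 := by
  have hs := summable_theta h0 hq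
  have i1 : Function.Injective fun k : ℤ => 2 * k := fun a b h => by simpa using h
  have i2 : Function.Injective fun k : ℤ => -1 - 2 * k := fun a b h => by simpa using h
  have h2 := tsum_split hs (fun k : ℤ => 2 * k) (fun k : ℤ => -1 - 2 * k) i1 i2
    (fun a b => by lia) (fun p => by
      rcases Int.even_or_odd' p with ⟨k, h | h⟩
      · exact .inl ⟨k, h.symm⟩
      · exact .inr ⟨-1 - k, by lia⟩)
  have s1 := hs.comp_injective i1
  have s2 := hs.comp_injective i2
  have e : ∀ k : ℤ, (fun j : ℤ => (j : ℂ) * (-1) ^ j * q ^ tri j) (2 * k) +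
      (fun j : ℤ => (j : ℂ) * (-1) ^ j * q ^ tri j) (-1 - 2 * k) =
      (4 * (k : ℂ) + 1) * q ^ (k * (2 * k + 1)) := fun k => by
    have t1 : tri (2 * k) = k * (2 * k + 1) := by linarith [two_mul_tri (2 * k)]
    have t2 : tri (-1 - 2 * k) = k * (2 * k + 1) := by linarith [two_mul_tri (-1 - 2 * k)]
    have p1 : (-1 : ℂ) ^ (2 * k) = 1 := (even_two_mul k).neg_one_zpow
    have p2 : (-1 : ℂ) ^ (-1 - 2 * k) = -1 := Odd.neg_one_zpow ⟨-1 - k, by ring⟩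
    simp only [t1, t2, p1, p2]
    push_cast; ring
  refine ⟨(s1.add s2).congr e, ?_⟩
  rw [← jacobi_tri h0 hq, h2]
  exact (tsum_congr fun k => (e k).symm).trans (Summable.tsum_add s1 s2)
end

/-! ### Theta series of the form `m² + 3n²` -/

section
variable {q : ℂ}

/-- The term `(a m² + b m n + c n²) q^{m² + 3n²}` of a theta series, with `p = (m, n)`. -/
noncomputable def quadTheta (a b c q : ℂ) (p : ℤ × ℤ) : ℂ :=
  (a * (p.1 : ℂ) ^ 2 + b * ((p.1 : ℂ) * p.2) + c * (p.2 : ℂ) ^ 2) * q ^ (p.1 ^ 2 + 3 * p.2 ^ 2)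

lemma summable_quadTheta (h0 : q ≠ 0) (hq : ‖q‖ < 1) (a b c : ℂ) :
    Summable (quadTheta a b c q) := by
  have hg : Summable fun m : ℤ => ((m.natAbs : ℝ) ^ 2 + 1) * ‖q‖ ^ m.natAbs := by
    refine ((summable_int_pow (norm_nonneg q) hq 2).add
      (summable_int_pow (norm_nonneg q) hq 0)).congr fun m => ?_
    ring
  have hgg := (hg.mul_of_nonneg hg (fun m => by positivity) (fun m => by positivity)).mul_left
    (‖a‖ + ‖b‖ + ‖c‖)
  refine .of_norm_bounded hgg fun p => ?_
  obtain ⟨m, n⟩ := p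
  have e : m ^ 2 + 3 * n ^ 2 = ((m.natAbs ^ 2 + 3 * n.natAbs ^ 2 : ℕ) : ℤ) := by
    push_cast; simp
  have hp : ‖q ^ (m ^ 2 + 3 * n ^ 2)‖ ≤ ‖q‖ ^ m.natAbs * ‖q‖ ^ n.natAbs := by
    rw [e, zpow_natCast, norm_pow, ← pow_add]
    refine pow_le_pow_of_le_one (norm_nonneg _) hq.le ?_
    nlinarith [Nat.le_self_pow (two_ne_zero) m.natAbs, Nat.le_self_pow (two_ne_zero) n.natAbs]
  have hm : ‖(m : ℂ)‖ = m.natAbs := by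
    rw [Complex.norm_intCast, Nat.cast_natAbs, Int.cast_abs]
  have hn : ‖(n : ℂ)‖ = n.natAbs := by
    rw [Complex.norm_intCast, Nat.cast_natAbs, Int.cast_abs]
  simp only [quadTheta]
  rw [norm_mul]
  generalize (m.natAbs : ℝ) = x at *
  generalize (n.natAbs : ℝ) = y at *
  have hx : 0 ≤ x := hm ▸ norm_nonneg _
  have hy : 0 ≤ y := hn ▸ norm_nonneg _
  have hc : ‖a * (m : ℂ) ^ 2 + b * ((m : ℂ) * n) + c * (n : ℂ) ^ 2‖ ≤
      (‖a‖ + ‖b‖ + ‖c‖) * ((x ^ 2 + 1) * (y ^ 2 + 1)) := by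
    refine norm_add₃_le.trans ?_
    simp only [norm_mul, norm_pow, hm, hn, add_mul]
    gcongr
    · nlinarith [sq_nonneg (x * y), sq_nonneg y]
    · nlinarith [sq_nonneg (x * y - 1), sq_nonneg (x - y), sq_nonneg (x * y),
        mul_nonneg hx hy, sq_nonneg x, sq_nonneg y]
    · nlinarith [sq_nonneg (x * y), sq_nonneg x]
  calc _ ≤ ((‖a‖ + ‖b‖ + ‖c‖) * ((x ^ 2 + 1) * (y ^ 2 + 1))) *
        (‖q‖ ^ m.natAbs * ‖q‖ ^ n.natAbs) := by gcongr
    _ = _ := by ring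

lemma inj_even : Function.Injective fun p : ℤ × ℤ => (2 * p.1 + p.2, p.2) := by
  rintro ⟨a, b⟩ ⟨c, d⟩ h; simp only [Prod.mk.injEq] at h ⊢; lia

lemma inj_odd : Function.Injective fun p : ℤ × ℤ => (2 * p.1 + p.2 + 1, p.2) := by
  rintro ⟨a, b⟩ ⟨c, d⟩ h; simp only [Prod.mk.injEq] at h ⊢; lia

/-- Multiplication by the cube root of unity `ω = (-1 + √-3)/2` on the Eisenstein integers, where
`(x, y)` stands for `x - y ω²`, that is for half of `(2x + y) + y√-3`. -/
def eisRot : ℤ × ℤ ≃ ℤ × ℤ where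
  toFun p := (-(p.1 + p.2), p.1)
  invFun p := (p.2, -(p.1 + p.2))
  left_inv p := by ext <;> simp
  right_inv p := by ext <;> simp

/-- If `α` runs through an orbit of multiplication by `ω`, then the norm of `α` is constant and the
values `α²` add up to `0`, since `1 + ω² + ω⁴ = 0`. -/
lemma quadTheta_orbit (p : ℤ × ℤ) :
    quadTheta 1 0 (-3) q (2 * p.1 + p.2, p.2) +
      quadTheta 1 0 (-3) q (2 * (eisRot p).1 + (eisRot p).2, (eisRot p).2) +
      quadTheta 1 0 (-3) q (2 * (eisRot (eisRot p)).1 + (eisRot (eisRot p)).2,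
        (eisRot (eisRot p)).2) = 0 := by
  obtain ⟨x, y⟩ := p
  simp only [eisRot, quadTheta, Equiv.coe_fn_mk]
  rw [show (2 * -(x + y) + x) ^ 2 + 3 * x ^ 2 = (2 * x + y) ^ 2 + 3 * y ^ 2 by ring,
    show (2 * -(-(x + y) + x) + -(x + y)) ^ 2 + 3 * (-(x + y)) ^ 2 =
      (2 * x + y) ^ 2 + 3 * y ^ 2 by ring]
  push_cast
  ring

/-- The terms with `m ≡ n (mod 2)` cancel: this index set is twice the Eisenstein integers, which
the cube roots of unity permute. -/
lemma tsum_even_eq_zero (h0 : q ≠ 0) (hq : ‖q‖ < 1) :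
    ∑' p : ℤ × ℤ, quadTheta 1 0 (-3) q (2 * p.1 + p.2, p.2) = 0 := by
  have hG : Summable fun p : ℤ × ℤ => quadTheta 1 0 (-3) q (2 * p.1 + p.2, p.2) :=
    (summable_quadTheta h0 hq 1 0 (-3)).comp_injective inj_even
  have hz := quadTheta_orbit (q := q)
  generalize hGdef : (fun p : ℤ × ℤ => quadTheta 1 0 (-3) q (2 * p.1 + p.2, p.2)) = G at hG ⊢
  replace hz : ∀ p, G p + G (eisRot p) + G (eisRot (eisRot p)) = 0 := by
    subst hGdef; exact hz
  have r1 : ∑' p, G (eisRot p) = ∑' p, G p := eisRot.tsum_eq G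
  have r2 : ∑' p, G (eisRot (eisRot p)) = ∑' p, G p :=
    (eisRot.tsum_eq fun p => G (eisRot p)).trans r1
  have s1 : Summable fun p => G (eisRot p) :=
    (eisRot.summable_iff (f := G)).2 hG
  have s2 : Summable fun p => G (eisRot (eisRot p)) :=
    (eisRot.summable_iff (f := fun p => G (eisRot p))).2 s1
  have h3 := (hG.add s1).tsum_add s2
  rw [hG.tsum_add s1, r1, r2, tsum_congr hz, tsum_zero] at h3
  linear_combination -h3 / 3

/-- The sum of `(a m² + b m n + c n²) q^{m² + 3n²}` over the pairs with `m + n` odd, parametrised as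
`(m, n) = (2x + y + 1, y)`. -/
noncomputable def oddSum (a b c q : ℂ) : ℂ :=
  ∑' p : ℤ × ℤ, quadTheta a b c q (2 * p.1 + p.2 + 1, p.2)

lemma tsum_all_eq_odd (h0 : q ≠ 0) (hq : ‖q‖ < 1) :
    ∑' p : ℤ × ℤ, quadTheta 1 0 (-3) q p = oddSum 1 0 (-3) q := by
  rw [tsum_split (summable_quadTheta h0 hq 1 0 (-3)) _ _ inj_even inj_odd, tsum_even_eq_zero h0 hq,
    zero_add, oddSum]
  · rintro ⟨a, b⟩ ⟨c, d⟩ h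
    simp only [Prod.mk.injEq] at h; lia
  · rintro ⟨m, n⟩
    rcases Int.even_or_odd' (m - n) with ⟨k, h | h⟩
    · exact .inl ⟨(k, n), by simp only [Prod.mk.injEq]; lia⟩
    · exact .inr ⟨(k, n), by simp only [Prod.mk.injEq]; lia⟩

/-- The cross term contributes nothing, by the symmetry `n ↦ -n`. -/
lemma oddSum_cross (h0 : q ≠ 0) (hq : ‖q‖ < 1) (b : ℂ) :
    oddSum 1 b (-3) q = oddSum 1 0 (-3) q := by
  have s : ∀ b, Summable fun p : ℤ × ℤ => quadTheta 1 b (-3) q (2 * p.1 + p.2 + 1, p.2) :=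
    fun b => (summable_quadTheta h0 hq 1 b (-3)).comp_injective inj_odd
  let ρ : ℤ × ℤ ≃ ℤ × ℤ :=
    ⟨fun p => (p.1 + p.2, -p.2), fun p => (p.1 + p.2, -p.2),
      fun p => by ext <;> simp, fun p => by ext <;> simp⟩
  have h : oddSum 1 b (-3) q = oddSum 1 (-b) (-3) q := by
    rw [oddSum, ← ρ.tsum_eq]
    refine tsum_congr ?_
    rintro ⟨x, y⟩
    simp only [ρ, quadTheta, Equiv.coe_fn_mk]
    rw [show (2 * (x + y) + -y + 1) ^ 2 + 3 * (-y) ^ 2 = (2 * x + y + 1) ^ 2 + 3 * y ^ 2 by ring]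
    push_cast
    ring
  have h2 : oddSum 1 b (-3) q + oddSum 1 (-b) (-3) q = 2 * oddSum 1 0 (-3) q := by
    rw [oddSum, oddSum, ← (s b).tsum_add (s (-b)), oddSum, ← tsum_mul_left]
    refine tsum_congr fun p => ?_
    simp only [quadTheta]
    ring
  rw [← h] at h2
  linear_combination h2 / 2

/-- The pairs with `m + n` odd are `±(k + 3l + 1, l - k)`, the images of
`((4k + 1) + (4l + 1)√-3)/2` under multiplication by a sixth root of unity, and the form
`m² - 2mn - 3n²` takes the value `(4k + 1)(4l + 1)` there. -/
lemma oddSum_eq_two_mul (h0 : q ≠ 0) (hq : ‖q‖ < 1) :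
    oddSum 1 (-2) (-3) q = 2 * ∑' p : ℤ × ℤ, (4 * (p.1 : ℂ) + 1) * (4 * (p.2 : ℂ) + 1) *
      q ^ ((p.1 + 3 * p.2 + 1) ^ 2 + 3 * (p.1 - p.2) ^ 2) := by
  have s : Summable fun p : ℤ × ℤ => quadTheta 1 (-2) (-3) q (2 * p.1 + p.2 + 1, p.2) :=
    (summable_quadTheta h0 hq 1 (-2) (-3)).comp_injective inj_odd
  rw [oddSum, tsum_split s (fun p : ℤ × ℤ => (-p.1 - p.2 - 1, p.1 - p.2))
    (fun p : ℤ × ℤ => (p.1 + p.2, p.2 - p.1)), two_mul]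
  · congr 1 <;> refine tsum_congr ?_ <;> rintro ⟨k, l⟩ <;> simp only [quadTheta]
    · rw [show (2 * (-k - l - 1) + (k - l) + 1) ^ 2 + 3 * (k - l) ^ 2 =
        (k + 3 * l + 1) ^ 2 + 3 * (k - l) ^ 2 by ring]
      push_cast; ring
    · rw [show (2 * (k + l) + (l - k) + 1) ^ 2 + 3 * (l - k) ^ 2 =
        (k + 3 * l + 1) ^ 2 + 3 * (k - l) ^ 2 by ring]
      push_cast; ring
  · rintro ⟨a, b⟩ ⟨c, d⟩ h; simp only [Prod.mk.injEq] at h ⊢; lia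
  · rintro ⟨a, b⟩ ⟨c, d⟩ h; simp only [Prod.mk.injEq] at h ⊢; lia
  · rintro ⟨a, b⟩ ⟨c, d⟩ h; simp only [Prod.mk.injEq] at h; lia
  · rintro ⟨x, y⟩
    rcases Int.even_or_odd' (x + y) with ⟨k, h | h⟩
    · exact .inr ⟨(x - k, k), by simp only [Prod.mk.injEq]; lia⟩
    · exact .inl ⟨(k - x, -k - 1), by simp only [Prod.mk.injEq]; lia⟩

/-- The form `g` as a function of `q`: `q ∏ (1 - q²ⁿ)³ ∏ (1 - q⁶ⁿ)³`. -/
noncomputable def cubeProd (q : ℂ) : ℂ :=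
  q * (∏' n : ℕ, (1 - (q ^ 2) ^ (n + 1))) ^ 3 * (∏' n : ℕ, (1 - (q ^ 6) ^ (n + 1))) ^ 3

lemma two_mul_cubeProd (h0 : q ≠ 0) (hq : ‖q‖ < 1) :
    2 * cubeProd q = oddSum 1 0 (-3) q := by
  have h2 : ‖q ^ 2‖ < 1 := by rw [norm_pow]; exact pow_lt_one₀ (norm_nonneg _) hq two_ne_zero
  have h6 : ‖q ^ 6‖ < 1 := by rw [norm_pow]; exact pow_lt_one₀ (norm_nonneg _) hq (by norm_num)
  obtain ⟨s2, e2⟩ := summable_jacobi (pow_ne_zero 2 h0) h2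
  obtain ⟨s6, e6⟩ := summable_jacobi (pow_ne_zero 6 h0) h6
  rw [← oddSum_cross h0 hq (-2), oddSum_eq_two_mul h0 hq, cubeProd, ← e2, ← e6, mul_assoc q,
    tsum_mul_tsum_of_summable_norm s2.norm s6.norm, ← tsum_mul_left]
  congr 1
  refine tsum_congr ?_
  rintro ⟨k, l⟩
  have : q ^ ((k + 3 * l + 1) ^ 2 + 3 * (k - l) ^ 2) =
      q * ((q ^ 2) ^ (k * (2 * k + 1)) * (q ^ 6) ^ (l * (2 * l + 1))) := by
    rw [← zpow_natCast q 2, ← zpow_natCast q 6, ← zpow_mul, ← zpow_mul, ← zpow_add₀ h0,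
      ← zpow_one_add₀ h0]
    congr 1; push_cast; ring
  simp only [this]
  ring

/-- The theorem as an identity in `q`. -/
lemma theta_identity (h0 : q ≠ 0) (hq : ‖q‖ < 1) :
    Summable (fun p : ℤ × ℤ => (((p.1 : ℂ) ^ 2 - 12 * (p.2 : ℂ) ^ 2) / 2) *
      q ^ (p.1 ^ 2 + 12 * p.2 ^ 2) + ((4 * (p.2 : ℂ) ^ 2 - 3 * (p.1 : ℂ) ^ 2) / 2) *
      q ^ (3 * p.1 ^ 2 + 4 * p.2 ^ 2)) ∧
    cubeProd q + 8 * cubeProd (q ^ 4) =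
    ∑' p : ℤ × ℤ, ((((p.1 : ℂ) ^ 2 - 12 * (p.2 : ℂ) ^ 2) / 2) *
      q ^ (p.1 ^ 2 + 12 * p.2 ^ 2) + ((4 * (p.2 : ℂ) ^ 2 - 3 * (p.1 : ℂ) ^ 2) / 2) *
      q ^ (3 * p.1 ^ 2 + 4 * p.2 ^ 2)) := by
  set F := quadTheta 1 0 (-3) q with hF
  have hs : Summable F := summable_quadTheta h0 hq 1 0 (-3)
  have iA : Function.Injective fun p : ℤ × ℤ => (p.1, 2 * p.2) := by
    rintro ⟨a, b⟩ ⟨c, d⟩ h; simp only [Prod.mk.injEq] at h ⊢; lia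
  have iB : Function.Injective fun p : ℤ × ℤ => (2 * p.2, p.1) := by
    rintro ⟨a, b⟩ ⟨c, d⟩ h; simp only [Prod.mk.injEq] at h ⊢; lia
  have sA : Summable fun p : ℤ × ℤ => F (p.1, 2 * p.2) := hs.comp_injective iA
  have sB : Summable fun p : ℤ × ℤ => F (2 * p.2, p.1) := hs.comp_injective iB
  have sO : Summable fun p : ℤ × ℤ => F (2 * p.1 + p.2 + 1, p.2) := hs.comp_injective inj_odd
  have e : ∀ p : ℤ × ℤ, 1 / 2 * F (p.1, 2 * p.2) + 1 / 2 * F (2 * p.2, p.1) =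
      (((p.1 : ℂ) ^ 2 - 12 * (p.2 : ℂ) ^ 2) / 2) *
      q ^ (p.1 ^ 2 + 12 * p.2 ^ 2) + ((4 * (p.2 : ℂ) ^ 2 - 3 * (p.1 : ℂ) ^ 2) / 2) *
      q ^ (3 * p.1 ^ 2 + 4 * p.2 ^ 2) := by
    rintro ⟨m, n⟩
    simp only [hF, quadTheta]
    rw [show m ^ 2 + 3 * (2 * n) ^ 2 = m ^ 2 + 12 * n ^ 2 by ring,
      show (2 * n) ^ 2 + 3 * m ^ 2 = 3 * m ^ 2 + 4 * n ^ 2 by ring]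
    push_cast; ring
  refine ⟨((sA.mul_left _).add (sB.mul_left _)).congr e, ?_⟩
  rw [← tsum_congr e, (sA.mul_left _).tsum_add (sB.mul_left _), tsum_mul_left, tsum_mul_left]
  -- Splitting by parity: `n` even, `m` even and `m + n` odd are built from three classes.
  have hA : ∑' p : ℤ × ℤ, F (p.1, 2 * p.2) =
      ∑' p : ℤ × ℤ, F (2 * p.1, 2 * p.2) + ∑' p : ℤ × ℤ, F (2 * p.1 + 1, 2 * p.2) := by
    refine tsum_split sA (fun p : ℤ × ℤ => (2 * p.1, p.2)) (fun p : ℤ × ℤ => (2 * p.1 + 1, p.2))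
      ?_ ?_ ?_ ?_
    · rintro ⟨a, b⟩ ⟨c, d⟩ h; simp only [Prod.mk.injEq] at h ⊢; lia
    · rintro ⟨a, b⟩ ⟨c, d⟩ h; simp only [Prod.mk.injEq] at h ⊢; lia
    · rintro ⟨a, b⟩ ⟨c, d⟩ h; simp only [Prod.mk.injEq] at h; lia
    · rintro ⟨x, y⟩
      rcases Int.even_or_odd' x with ⟨k, h | h⟩
      · exact .inl ⟨(k, y), by simp only [Prod.mk.injEq]; lia⟩
      · exact .inr ⟨(k, y), by simp only [Prod.mk.injEq]; lia⟩
  have hB : ∑' p : ℤ × ℤ, F (2 * p.2, p.1) =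
      ∑' p : ℤ × ℤ, F (2 * p.1, 2 * p.2) + ∑' p : ℤ × ℤ, F (2 * p.1, 2 * p.2 + 1) := by
    refine tsum_split sB (fun p : ℤ × ℤ => (2 * p.2, p.1)) (fun p : ℤ × ℤ => (2 * p.2 + 1, p.1))
      ?_ ?_ ?_ ?_
    · rintro ⟨a, b⟩ ⟨c, d⟩ h; simp only [Prod.mk.injEq] at h ⊢; lia
    · rintro ⟨a, b⟩ ⟨c, d⟩ h; simp only [Prod.mk.injEq] at h ⊢; lia
    · rintro ⟨a, b⟩ ⟨c, d⟩ h; simp only [Prod.mk.injEq] at h; lia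
    · rintro ⟨x, y⟩
      rcases Int.even_or_odd' x with ⟨k, h | h⟩
      · exact .inl ⟨(y, k), by simp only [Prod.mk.injEq]; lia⟩
      · exact .inr ⟨(y, k), by simp only [Prod.mk.injEq]; lia⟩
  have hO : oddSum 1 0 (-3) q =
      ∑' p : ℤ × ℤ, F (2 * p.1 + 1, 2 * p.2) + ∑' p : ℤ × ℤ, F (2 * p.1, 2 * p.2 + 1) := by
    rw [oddSum, ← hF, tsum_split sO (fun p : ℤ × ℤ => (p.1 - p.2, 2 * p.2))
      (fun p : ℤ × ℤ => (p.1 - p.2 - 1, 2 * p.2 + 1))]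
    · congr 1 <;> refine tsum_congr fun p => congrArg F ?_ <;> simp only [Prod.mk.injEq] <;> lia
    · rintro ⟨a, b⟩ ⟨c, d⟩ h; simp only [Prod.mk.injEq] at h ⊢; lia
    · rintro ⟨a, b⟩ ⟨c, d⟩ h; simp only [Prod.mk.injEq] at h ⊢; lia
    · rintro ⟨a, b⟩ ⟨c, d⟩ h; simp only [Prod.mk.injEq] at h; lia
    · rintro ⟨x, y⟩
      rcases Int.even_or_odd' y with ⟨k, h | h⟩
      · exact .inl ⟨(x + k, k), by simp only [Prod.mk.injEq]; lia⟩
      · exact .inr ⟨(x + k + 1, k), by simp only [Prod.mk.injEq]; lia⟩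
  have h4 : ‖q ^ 4‖ < 1 := by rw [norm_pow]; exact pow_lt_one₀ (norm_nonneg _) hq (by norm_num)
  have hE : ∑' p : ℤ × ℤ, F (2 * p.1, 2 * p.2) = 4 * (2 * cubeProd (q ^ 4)) := by
    rw [two_mul_cubeProd (pow_ne_zero 4 h0) h4, ← tsum_all_eq_odd (pow_ne_zero 4 h0) h4,
      ← tsum_mul_left]
    refine tsum_congr ?_
    rintro ⟨m, n⟩
    simp only [hF, quadTheta]
    rw [← zpow_natCast q 4, ← zpow_mul,
      show (2 * m) ^ 2 + 3 * (2 * n) ^ 2 = ((4 : ℕ) : ℤ) * (m ^ 2 + 3 * n ^ 2) by push_cast; ring]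
    push_cast; ring
  have hg := two_mul_cubeProd h0 hq
  rw [hO] at hg
  rw [hA, hB, hE]
  linear_combination hg / 2
end

/-! ### Passage to the upper half-plane -/

lemma gForm_eq_cubeProd (τ : ℂ) :
    gForm τ = cubeProd (Complex.exp (2 * (Real.pi : ℂ) * Complex.I * τ)) := by
  have e : ∀ k : ℕ, Complex.exp (2 * (Real.pi : ℂ) * Complex.I * (k * τ)) =
      Complex.exp (2 * (Real.pi : ℂ) * Complex.I * τ) ^ k := fun k => by
    rw [← Complex.exp_nat_mul]; congr 1; ring
  have e2 := e 2
  have e6 := e 6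
  push_cast at e2 e6
  have e1 : Complex.exp (2 * (Real.pi : ℂ) * Complex.I * τ) =
      Complex.exp (2 * (Real.pi : ℂ) * Complex.I * (2 * τ) / 24) ^ 3 *
      Complex.exp (2 * (Real.pi : ℂ) * Complex.I * (6 * τ) / 24) ^ 3 := by
    rw [← Complex.exp_nat_mul, ← Complex.exp_nat_mul, ← Complex.exp_add]
    congr 1; push_cast; ring
  rw [gForm, dedekindEta, dedekindEta, e2, e6, cubeProd, mul_pow, mul_pow]
  nth_rewrite 3 [e1]
  ring

theorem eta_g_g4_theta (τ : ℂ) (hτ : 0 < τ.im) :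
    Summable (fun p : ℤ × ℤ =>
      (((p.1 : ℂ) ^ 2 - 12 * (p.2 : ℂ) ^ 2) / 2) *
          Complex.exp (2 * (Real.pi : ℂ) * Complex.I * τ) ^ (p.1 ^ 2 + 12 * p.2 ^ 2) +
        ((4 * (p.2 : ℂ) ^ 2 - 3 * (p.1 : ℂ) ^ 2) / 2) *
          Complex.exp (2 * (Real.pi : ℂ) * Complex.I * τ) ^ (3 * p.1 ^ 2 + 4 * p.2 ^ 2)) ∧
    gForm τ + 8 * gForm (4 * τ) =
      ∑' p : ℤ × ℤ,
        ((((p.1 : ℂ) ^ 2 - 12 * (p.2 : ℂ) ^ 2) / 2) *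
            Complex.exp (2 * (Real.pi : ℂ) * Complex.I * τ) ^ (p.1 ^ 2 + 12 * p.2 ^ 2) +
          ((4 * (p.2 : ℂ) ^ 2 - 3 * (p.1 : ℂ) ^ 2) / 2) *
            Complex.exp (2 * (Real.pi : ℂ) * Complex.I * τ) ^ (3 * p.1 ^ 2 + 4 * p.2 ^ 2)) := by
  have hq : ‖Complex.exp (2 * (Real.pi : ℂ) * Complex.I * τ)‖ < 1 :=
    UpperHalfPlane.norm_exp_two_pi_I_lt_one ⟨τ, hτ⟩
  have e4 : Complex.exp (2 * (Real.pi : ℂ) * Complex.I * (4 * τ)) =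
      Complex.exp (2 * (Real.pi : ℂ) * Complex.I * τ) ^ 4 := by
    rw [← Complex.exp_nat_mul]; congr 1; push_cast; ring
  rw [gForm_eq_cubeProd, gForm_eq_cubeProd, e4]
  exact theta_identity (Complex.exp_ne_zero _) hq
end

section
/- For every complex t with Re(t) > 1, 2·(1 − 3·2^{−t} + 2·2^{−2t})·ζ(t)·L(χ_{−4}, t) = Σ′_{m,n} [ 1/(m² + 4n²)^t − 1/(2m² + 2n²)^t ]. -/
/-!
Write `S = Σ' (m² + n²)^(-t)`. Jacobi's two-square theorem `r(n) = 4 Σ_{d ∣ n} χ(d)` gives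
`S = 4 ζ(t) L(χ, t)`, because the divisor sum is the Dirichlet convolution of `χ` with `1`.
Jacobi's theorem (`card_sqReps`) follows by induction on `n` from the fact that, for each prime `p`,
both sides satisfy the recursion `f(pn) = (1 + χ(p)) f(n) - χ(p) f(n/p)`. For the divisor sum this
is inclusion-exclusion on the divisors of `pn` (`sum_divisors_prime_mul`); for `r` it is
inclusion-exclusion on Gaussian integers of norm `pn`, according to whether `p` is ramified, split
or inert in `ℤ[i]` (`card_sqReps_prime_mul`).

The form `m² + 4n²` is the norm form on the sublattice `{n even}`. By parity considerations
(`hasSum_even_second`) its series is `(1 + 2 * 4^(-t) - 2^(-t)) S / 2`, while the form `2m² + 2n²`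
contributes `2^(-t) S`. The difference is `(1 - 3 * 2^(-t) + 2 * 4^(-t)) S / 2`.
-/


/-- The Dirichlet `L`-series `L(χ, t) = Σ_{n ≥ 1} χ(n)·n^{−t}` of an arithmetic
function `χ` (with `χ 0 = 0`). -/
noncomputable def dirichletL (χ : ℕ → ℂ) (t : ℂ) : ℂ := ∑' n : ℕ, χ n / (n : ℂ) ^ t

/-- The odd quadratic Dirichlet character modulo 4. -/
def chiNeg4 (n : ℕ) : ℂ := if n % 4 = 1 then 1 else if n % 4 = 3 then -1 else 0

/-! ### Representations by a sum of two squares -/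

/-- The finite set of all `(x, y) ∈ ℤ²` with `x² + y² = n`; the box only serves to make
finiteness evident (see `mem_sqReps`). -/
noncomputable def sqReps (n : ℕ) : Finset (ℤ × ℤ) :=
  (Finset.Icc (-(n : ℤ)) n ×ˢ Finset.Icc (-(n : ℤ)) n).filter fun z => z.1 ^ 2 + z.2 ^ 2 = n

theorem mem_sqReps {n : ℕ} {z : ℤ × ℤ} : z ∈ sqReps n ↔ z.1 ^ 2 + z.2 ^ 2 = n := by
  unfold sqReps
  rw [Finset.mem_filter, Finset.mem_product, Finset.mem_Icc, Finset.mem_Icc,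
    and_iff_right_of_imp]
  intro h
  have key : ∀ x y : ℤ, x ^ 2 + y ^ 2 = n → -(n : ℤ) ≤ x ∧ x ≤ n := by
    intro x y h
    have h1 := Int.le_self_sq x
    have h2 := Int.le_self_sq (-x)
    have h3 := sq_nonneg y
    constructor <;> nlinarith
  exact ⟨key _ _ h, key z.2 z.1 (by linarith)⟩

/-- Multiplication by the Gaussian integer `a + b i`, in coordinates. -/
def gmul (a b : ℤ) (z : ℤ × ℤ) : ℤ × ℤ := (a * z.1 - b * z.2, a * z.2 + b * z.1)

theorem gmul_injective {a b : ℤ} (h : a ^ 2 + b ^ 2 ≠ 0) : Function.Injective (gmul a b) := by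
  rintro ⟨x, y⟩ ⟨u, v⟩ hz
  simp only [gmul, Prod.mk.injEq] at hz ⊢
  obtain ⟨h1, h2⟩ := hz
  constructor <;> apply mul_left_cancel₀ h
  · linear_combination a * h1 + b * h2
  · linear_combination a * h2 - b * h1

theorem gmul_mem_sqReps {p n : ℕ} {a b : ℤ} (h : a ^ 2 + b ^ 2 = p) {z : ℤ × ℤ}
    (hz : z ∈ sqReps n) : gmul a b z ∈ sqReps (p * n) := by
  rw [mem_sqReps] at *
  simp only [gmul]
  push_cast
  rw [← h, ← hz]; ring

/-- For `p = a² + b²` prime, a Gaussian integer `z` of norm `p n` is a multiple of `π = a + b i`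
as soon as `p` divides the real part of `conj π * z`: the norm of `conj π * z` is `p² n`, so `p`
then divides the imaginary part too. -/
theorem mem_image_gmul {p n : ℕ} (hp : p.Prime) {a b : ℤ} (h : a ^ 2 + b ^ 2 = p) {z : ℤ × ℤ}
    (hz : z ∈ sqReps (p * n)) :
    z ∈ (sqReps n).image (gmul a b) ↔ (p : ℤ) ∣ a * z.1 + b * z.2 := by
  have hp0 : (p : ℤ) ≠ 0 := by exact_mod_cast hp.ne_zero
  rw [mem_sqReps] at hz
  push_cast at hz
  rw [Finset.mem_image]
  constructor
  · rintro ⟨w, -, rfl⟩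
    refine ⟨w.1, ?_⟩
    simp only [gmul]
    linear_combination w.1 * h
  · rintro ⟨x, hx⟩
    have hy : (p : ℤ) ∣ a * z.2 - b * z.1 := by
      apply (Nat.prime_iff_prime_int.mp hp).dvd_of_dvd_pow (n := 2)
      exact ⟨p * n - p * x ^ 2, by
        linear_combination (z.1 ^ 2 + z.2 ^ 2) * h + p * hz - (a * z.1 + b * z.2 + p * x) * hx⟩
    obtain ⟨y, hy⟩ := hy
    have e1 : z.1 = a * x - b * y := by
      apply mul_left_cancel₀ hp0
      linear_combination -z.1 * h + a * hx - b * hy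
    have e2 : z.2 = a * y + b * x := by
      apply mul_left_cancel₀ hp0
      linear_combination -z.2 * h + b * hx + a * hy
    refine ⟨(x, y), ?_, ?_⟩
    · rw [mem_sqReps]
      apply mul_left_cancel₀ hp0
      rw [← hz, e1, e2, ← h]; ring
    · ext <;> simp [gmul, e1, e2]

/-- The Gaussian integers of norm `p n` that are divisible by the integer `p`: the `p`-multiples of
those of norm `n / p`, hence none if `p ∤ n`. -/
noncomputable def scaledReps (p n : ℕ) : Finset (ℤ × ℤ) :=
  if p ∣ n then (sqReps (n / p)).image (gmul p 0) else ∅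

theorem mem_scaledReps {p n : ℕ} (hp : p.Prime) {z : ℤ × ℤ} (hz : z ∈ sqReps (p * n)) :
    z ∈ scaledReps p n ↔ (p : ℤ) ∣ z.1 ∧ (p : ℤ) ∣ z.2 := by
  have hp0 : (p : ℤ) ≠ 0 := by exact_mod_cast hp.ne_zero
  rw [mem_sqReps] at hz
  push_cast at hz
  unfold scaledReps
  constructor
  · split_ifs
    · rw [Finset.mem_image]
      rintro ⟨w, -, rfl⟩
      simp [gmul]
    · simp
  · rintro ⟨⟨x, hx⟩, ⟨y, hy⟩⟩
    have hn : (n : ℤ) = p * (x ^ 2 + y ^ 2) := by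
      apply mul_left_cancel₀ hp0
      rw [← hz, hx, hy]; ring
    have hd : p ∣ n := by exact_mod_cast Dvd.intro _ hn.symm
    rw [if_pos hd, Finset.mem_image]
    refine ⟨(x, y), ?_, ?_⟩
    · rw [mem_sqReps]
      apply mul_left_cancel₀ hp0
      rw [← hn]
      exact_mod_cast (Nat.mul_div_cancel' hd).symm
    · ext <;> simp [gmul, hx, hy]

theorem scaledReps_subset {p n : ℕ} : scaledReps p n ⊆ sqReps (p * n) := by
  unfold scaledReps
  split_ifs with hd
  · intro z hz
    obtain ⟨w, hw, rfl⟩ := Finset.mem_image.mp hz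
    obtain ⟨k, rfl⟩ := hd
    rcases Nat.eq_zero_or_pos p with rfl | hp
    · simp [gmul, mem_sqReps]
    rw [Nat.mul_div_cancel_left _ hp, mem_sqReps] at hw
    rw [mem_sqReps]
    simp only [gmul]
    push_cast
    rw [← hw]; ring
  · simp

theorem card_scaledReps {p n : ℕ} (hp : p.Prime) :
    (scaledReps p n).card = if p ∣ n then (sqReps (n / p)).card else 0 := by
  unfold scaledReps
  split_ifs
  · apply Finset.card_image_of_injective
    apply gmul_injective
    have := hp.ne_zero
    positivity
  · simp

open ZMod in
/-- The Hecke recursion `r(pn) = (1 + χ(p)) r(n) - χ(p) r(n/p)` for the number `r` of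
representations, which reflects the splitting of `p` in `ℤ[i]`. -/
theorem card_sqReps_prime_mul {p : ℕ} (hp : p.Prime) (n : ℕ) :
    ((sqReps (p * n)).card : ℤ) = (1 + χ₄ p) * (sqReps n).card
      - χ₄ p * (if p ∣ n then ((sqReps (n / p)).card : ℤ) else 0) := by
  have hpp := Nat.prime_iff_prime_int.mp hp
  have hp0 : (p : ℤ) ≠ 0 := by exact_mod_cast hp.ne_zero
  -- `p = 2` is ramified: multiplication by `1 + i` is onto the elements of norm `2n`.
  rcases hp.eq_two_or_odd with rfl | hodd
  · have h2 : (1 : ℤ) ^ 2 + 1 ^ 2 = (2 : ℕ) := by norm_num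
    have : sqReps (2 * n) = (sqReps n).image (gmul 1 1) := by
      ext z
      constructor
      · intro hz
        rw [mem_image_gmul hp h2 hz]
        rw [mem_sqReps] at hz
        push_cast at *
        have : Even (z.1 ^ 2 + z.2 ^ 2) := by rw [hz]; simp
        rw [Int.even_add, Int.even_pow' two_ne_zero, Int.even_pow' two_ne_zero,
          ← Int.even_add] at this
        simpa using this.two_dvd
      · intro hz
        obtain ⟨w, hw, rfl⟩ := Finset.mem_image.mp hz
        exact gmul_mem_sqReps h2 hw
    have h0 : χ₄ ((2 : ℕ) : ZMod 4) = 0 := by decide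
    rw [this, Finset.card_image_of_injective _ (gmul_injective (by norm_num)), h0]
    ring
  · have h4 : p % 4 = 1 ∨ p % 4 = 3 := by omega
    rcases h4 with h4 | h4
    -- `p = π * conj π` splits: elements of norm `pn` are multiples of `π` or of `conj π`, and
    -- those divisible by both are the multiples of `p`; conclude by inclusion-exclusion.
    · have := Fact.mk hp
      obtain ⟨a, b, hab⟩ := Nat.Prime.sq_add_sq (p := p) (by omega)
      have h1 : (a : ℤ) ^ 2 + (b : ℤ) ^ 2 = p := by exact_mod_cast hab
      have h2 : (a : ℤ) ^ 2 + (-b : ℤ) ^ 2 = p := by rw [neg_sq]; exact h1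
      have hndvd : ∀ a b : ℤ, a ^ 2 + b ^ 2 = p → ¬ (p : ℤ) ∣ a := by
        intro a b h ha
        have hb : (p : ℤ) ∣ b := by
          apply hpp.dvd_of_dvd_pow (n := 2)
          have : b ^ 2 = p - a * a := by linear_combination h
          rw [this]
          exact dvd_sub dvd_rfl (ha.mul_right _)
        obtain ⟨x, rfl⟩ := ha
        obtain ⟨y, rfl⟩ := hb
        have : (p : ℤ) ∣ 1 := ⟨x ^ 2 + y ^ 2, by
          apply mul_left_cancel₀ hp0
          linear_combination -h⟩
        exact hpp.not_dvd_one this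
      have ha := hndvd _ _ h1
      have hb := hndvd b a (by linarith)
      have h2' : ¬ (p : ℤ) ∣ 2 := by
        intro h
        have : p ∣ 2 := by exact_mod_cast h
        have := (Nat.prime_dvd_prime_iff_eq hp Nat.prime_two).mp this
        omega
      have hU : (sqReps n).image (gmul a b) ∪ (sqReps n).image (gmul a (-b))
          = sqReps (p * n) := by
        apply Finset.Subset.antisymm
        · apply Finset.union_subset <;> intro z hz <;>
            obtain ⟨w, hw, rfl⟩ := Finset.mem_image.mp hz
          · exact gmul_mem_sqReps h1 hw
          · exact gmul_mem_sqReps h2 hw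
        · intro z hz
          rw [Finset.mem_union, mem_image_gmul hp h1 hz, mem_image_gmul hp h2 hz]
          rw [mem_sqReps] at hz
          push_cast at hz
          apply hpp.dvd_or_dvd
          exact ⟨a ^ 2 * n - z.2 ^ 2, by linear_combination (a : ℤ) ^ 2 * hz - z.2 ^ 2 * h1⟩
      have hI : (sqReps n).image (gmul a b) ∩ (sqReps n).image (gmul a (-b))
          = scaledReps p n := by
        ext z
        by_cases hz : z ∈ sqReps (p * n)
        · rw [Finset.mem_inter, mem_image_gmul hp h1 hz, mem_image_gmul hp h2 hz,
            mem_scaledReps hp hz]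
          constructor
          · rintro ⟨hx, hy⟩
            have e1 : (p : ℤ) ∣ 2 * (a * z.1) := by
              have := dvd_add hx hy; ring_nf at this ⊢; exact this
            have e2 : (p : ℤ) ∣ 2 * (b * z.2) := by
              have := dvd_sub hx hy; ring_nf at this ⊢; exact this
            exact ⟨((hpp.dvd_or_dvd ((hpp.dvd_or_dvd e1).resolve_left h2'))).resolve_left ha,
              ((hpp.dvd_or_dvd ((hpp.dvd_or_dvd e2).resolve_left h2'))).resolve_left hb⟩
          · rintro ⟨hx, hy⟩
            exact ⟨dvd_add (hx.mul_left _) (hy.mul_left _), dvd_add (hx.mul_left _) (hy.mul_left _)⟩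
        · refine iff_of_false (fun h => hz ?_) (fun h => hz (scaledReps_subset h))
          rw [← hU]
          exact Finset.mem_union_left _ (Finset.mem_inter.mp h).1
      have hc := Finset.card_union_add_card_inter ((sqReps n).image (gmul a b))
        ((sqReps n).image (gmul a (-b)))
      rw [hU, hI, card_scaledReps hp,
        Finset.card_image_of_injective _ (gmul_injective (by rw [h1]; exact hp0)),
        Finset.card_image_of_injective _ (gmul_injective (by rw [h2]; exact hp0))] at hc
      rw [χ₄_nat_one_mod_four h4]
      have hc' := congrArg (Nat.cast : ℕ → ℤ) hc
      push_cast at hc'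
      linarith
    -- `p` is inert: since `-1` is not a square mod `p`, every element of norm `pn` is divisible by `p`.
    · have : sqReps (p * n) = scaledReps p n := by
        apply Finset.Subset.antisymm _ scaledReps_subset
        intro z hz
        rw [mem_scaledReps hp hz]
        rw [mem_sqReps] at hz
        push_cast at hz
        have := Fact.mk hp
        have key : ∀ x y : ℤ, x ^ 2 + y ^ 2 = p * n → (p : ℤ) ∣ x := by
          intro x y h
          by_contra hx
          have hx' : (x : ZMod p) ≠ 0 := by rwa [Ne, ZMod.intCast_zmod_eq_zero_iff_dvd]
          have h' : (x : ZMod p) ^ 2 + (y : ZMod p) ^ 2 = 0 := by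
            have := congrArg (Int.cast : ℤ → ZMod p) h
            push_cast at this
            simpa using this
          have := ZMod.mod_four_ne_three_of_sq_eq_neg_sq' (p := p) hx'
            (x := (y : ZMod p)) (by linear_combination h')
          exact this h4
        exact ⟨key _ _ hz, key z.2 z.1 (by linarith)⟩
      rw [this, card_scaledReps hp, χ₄_nat_three_mod_four h4]
      push_cast
      ring

open ZMod in
/-- The divisor sum of `χ₄` satisfies the same recursion: the divisors of `pn` are those of `n`
together with their `p`-multiples, and the overlap consists of the `p`-multiples of the divisors
of `n / p`. -/
theorem sum_divisors_prime_mul {p : ℕ} (hp : p.Prime) {n : ℕ} (hn : n ≠ 0) :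
    ∑ d ∈ (p * n).divisors, χ₄ d = (1 + χ₄ p) * ∑ d ∈ n.divisors, χ₄ d
      - χ₄ p * (if p ∣ n then ∑ d ∈ (n / p).divisors, χ₄ d else 0) := by
  have hinj : Function.Injective (p * · : ℕ → ℕ) := fun x y h =>
    Nat.eq_of_mul_eq_mul_left hp.pos h
  have hsum : ∀ m : ℕ, ∑ d ∈ m.divisors.image (p * ·), χ₄ d = χ₄ p * ∑ d ∈ m.divisors, χ₄ d := by
    intro m
    rw [Finset.sum_image (fun x _ y _ h => hinj h), Finset.mul_sum]
    exact Finset.sum_congr rfl fun d _ => by rw [Nat.cast_mul, map_mul]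
  have hU : (p * n).divisors = n.divisors ∪ n.divisors.image (p * ·) := by
    ext d
    simp only [Finset.mem_union, Finset.mem_image, Nat.mem_divisors]
    constructor
    · rintro ⟨h, -⟩
      by_cases hd : p ∣ d
      · obtain ⟨e, rfl⟩ := hd
        exact Or.inr ⟨e, ⟨Nat.dvd_of_mul_dvd_mul_left hp.pos h, hn⟩, rfl⟩
      · exact Or.inl ⟨((hp.coprime_iff_not_dvd.mpr hd).symm).dvd_of_dvd_mul_left h, hn⟩
    · rintro (⟨h, -⟩ | ⟨e, ⟨h, -⟩, rfl⟩)
      · exact ⟨h.mul_left _, mul_ne_zero hp.ne_zero hn⟩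
      · exact ⟨Nat.mul_dvd_mul_left _ h, mul_ne_zero hp.ne_zero hn⟩
  have hI : n.divisors ∩ n.divisors.image (p * ·)
      = if p ∣ n then (n / p).divisors.image (p * ·) else ∅ := by
    ext d
    split_ifs with hd
    · obtain ⟨k, rfl⟩ := hd
      have hk : k ≠ 0 := by rintro rfl; simp at hn
      rw [Nat.mul_div_cancel_left _ hp.pos]
      simp only [Finset.mem_inter, Finset.mem_image, Nat.mem_divisors]
      constructor
      · rintro ⟨⟨h, -⟩, ⟨e, -, rfl⟩⟩
        exact ⟨e, ⟨Nat.dvd_of_mul_dvd_mul_left hp.pos h, hk⟩, rfl⟩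
      · rintro ⟨e, ⟨h, -⟩, rfl⟩
        exact ⟨⟨Nat.mul_dvd_mul_left _ h, hn⟩, e, ⟨h.mul_left _, hn⟩, rfl⟩
    · simp only [Finset.mem_inter, Finset.mem_image, Nat.mem_divisors, Finset.notMem_empty,
        iff_false]
      rintro ⟨⟨h, -⟩, ⟨e, -, rfl⟩⟩
      exact hd (dvd_of_mul_right_dvd h)
  have := Finset.sum_union_inter (s₁ := n.divisors) (s₂ := n.divisors.image (p * ·))
    (f := fun d : ℕ => χ₄ (d : ZMod 4))
  rw [← hU, hI, hsum] at this
  split_ifs at this ⊢ with hd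
  · rw [hsum] at this
    linear_combination this
  · rw [Finset.sum_empty] at this
    linear_combination this

/-- Jacobi's two-square theorem. -/
theorem card_sqReps {n : ℕ} (hn : n ≠ 0) :
    ((sqReps n).card : ℤ) = 4 * ∑ d ∈ n.divisors, ZMod.χ₄ d := by
  induction n using Nat.strong_induction_on with
  | _ n ih =>
    rcases eq_or_ne n 1 with rfl | h1
    · decide
    have hp := Nat.minFac_prime h1
    obtain ⟨m, hm⟩ := Nat.minFac_dvd n
    set p := n.minFac
    have hm0 : m ≠ 0 := by rintro rfl; exact hn (by simpa using hm)
    have hmn : m < n := by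
      rw [hm]; exact lt_mul_of_one_lt_left (Nat.pos_of_ne_zero hm0) hp.one_lt
    rw [hm, card_sqReps_prime_mul hp, sum_divisors_prime_mul hp hm0, ih m hmn hm0]
    split_ifs with hd
    · have hlt : m / p < n := (Nat.div_le_self _ _).trans_lt hmn
      have h0 : m / p ≠ 0 := (Nat.div_pos (Nat.le_of_dvd (Nat.pos_of_ne_zero hm0) hd) hp.pos).ne'
      rw [ih _ hlt h0]; ring
    · ring

/-! ### The Dirichlet series of the norm form -/

theorem chiNeg4_eq (n : ℕ) : chiNeg4 n = ((ZMod.χ₄ n : ℤ) : ℂ) := by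
  rw [ZMod.χ₄_nat_eq_if_mod_four, chiNeg4]
  have h4 : n % 4 < 4 := Nat.mod_lt _ (by norm_num)
  split_ifs <;> first | omega | simp

theorem dirichletL_chiNeg4 (t : ℂ) : dirichletL chiNeg4 t = LSeries chiNeg4 t := by
  refine tsum_congr fun n => ?_
  rcases eq_or_ne n 0 with rfl | hn
  · simp [chiNeg4]
  · rw [LSeries.term_of_ne_zero hn]

open LSeries.notation in
theorem hasSum_card_sqReps {t : ℂ} (ht : 1 < t.re) :
    HasSum (fun n : ℕ => ((sqReps n).card : ℂ) * (1 / (n : ℂ) ^ t))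
      (4 * (riemannZeta t * dirichletL chiNeg4 t)) := by
  have hχ : LSeriesSummable chiNeg4 t := by
    apply LSeriesSummable_of_bounded_of_one_lt_re (m := 1) _ ht
    intro n _
    unfold chiNeg4
    split_ifs <;> simp
  have h1 := LSeriesSummable_one_iff.mpr ht
  have := (hχ.LSeriesHasSum.convolution h1.LSeriesHasSum).mul_left 4
  rw [LSeries_one_eq_riemannZeta ht, ← dirichletL_chiNeg4, mul_comm (dirichletL _ _)] at this
  refine this.congr_fun ?_
  intro n
  rcases eq_or_ne n 0 with rfl | hn
  · have : t ≠ 0 := by rintro rfl; simp at ht; linarith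
    simp [Complex.zero_cpow this]
  · have hc := congrArg (Int.cast : ℤ → ℂ) (card_sqReps hn)
    push_cast at hc
    rw [LSeries.term_of_ne_zero hn, hc, LSeries.convolution_def]
    simp only [chiNeg4_eq, Pi.one_apply, mul_one]
    rw [Nat.sum_divisorsAntidiagonal (fun a _ => ((ZMod.χ₄ a : ℤ) : ℂ))]
    ring

/-- The norm `x² + y²` as a natural number. -/
def sqNorm (z : ℤ × ℤ) : ℕ := z.1.natAbs ^ 2 + z.2.natAbs ^ 2

theorem sqNorm_cast (z : ℤ × ℤ) : (sqNorm z : ℤ) = z.1 ^ 2 + z.2 ^ 2 := by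
  simp [sqNorm]

theorem sqNorm_castC (z : ℤ × ℤ) : (sqNorm z : ℂ) = (z.1 : ℂ) ^ 2 + (z.2 : ℂ) ^ 2 := by
  exact_mod_cast congrArg (Int.cast : ℤ → ℂ) (sqNorm_cast z)

/-- A series over the values of the norm form, weighted by representation numbers, may be
rearranged into a sum over the lattice: the fibres of the norm are finite, and absolute convergence
carries over to `ℤ²`. -/
theorem hasSum_sqNorm {h : ℕ → ℂ} {a : ℂ}
    (H : HasSum (fun n => ((sqReps n).card : ℂ) * h n) a) :
    HasSum (fun z => h (sqNorm z)) a := by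
  have hset : ∀ n, {z | sqNorm z = n} = (sqReps n : Set (ℤ × ℤ)) := by
    intro n
    ext z
    rw [Finset.mem_coe, mem_sqReps, ← sqNorm_cast, Set.mem_ofPred_eq, Nat.cast_inj]
  have hfib : ∀ {E : Type} [NormedAddCommGroup E] (k : ℕ → E) (n : ℕ),
      HasSum (fun z : {z // sqNorm z = n} => k (sqNorm z.1)) ((sqReps n).card • k n) := by
    intro E _ k n
    have h1 : HasSum (fun z : ({z | sqNorm z = n} : Set (ℤ × ℤ)) => k n)
        ((sqReps n).card • k n) := by
      rw [hset n]
      simpa [Function.comp_def] using (sqReps n).hasSum (fun _ => k n)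
    exact h1.congr_fun fun z => congrArg k z.2
  let e := Equiv.sigmaFiberEquiv sqNorm
  have hs : Summable fun z => h (sqNorm z) := by
    apply Summable.of_norm
    rw [← e.summable_iff]
    refine (summable_sigma_of_nonneg (fun _ => norm_nonneg _)).mpr ⟨fun n => (hfib (fun n => ‖h n‖) n).summable, ?_⟩
    refine H.summable.norm.congr fun n => ?_
    exact ((hfib (fun n => ‖h n‖) n).tsum_eq.trans (by simp)).symm
  have h2 := (e.hasSum_iff.mpr hs.hasSum).sigma (fun n => hfib h n)
  simp only [nsmul_eq_mul] at h2
  rw [H.unique h2]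
  exact hs.hasSum

/-! ### Restricting to sublattices -/

theorem inv_cpow_mul (c n : ℕ) (t : ℂ) :
    1 / ((c * n : ℕ) : ℂ) ^ t = 1 / (c : ℂ) ^ t * (1 / (n : ℂ) ^ t) := by
  rw [Nat.cast_mul, Complex.natCast_mul_natCast_cpow, one_div_mul_one_div]

/-- The sum over the sublattice `{n even}`, for a function `h` of the norm that is homogeneous under
doubling and quadrupling. By symmetry it equals the sum over `{m even}`, and
`1[m even] + 1[n even] = 1 + 2 * 1[both even] - 1[m + n even]`; the sublattices on the right are
`2 ℤ²` and `(1 + i) ℤ[i]`, whose sums are `c₄ S` and `c₂ S`. -/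
theorem hasSum_even_second {h : ℕ → ℂ} {S c₂ c₄ : ℂ} (H : HasSum (fun z => h (sqNorm z)) S)
    (h2 : ∀ n, h (2 * n) = c₂ * h n) (h4 : ∀ n, h (4 * n) = c₄ * h n) :
    HasSum (fun z : ℤ × ℤ => h (sqNorm (z.1, 2 * z.2))) ((S + 2 * c₄ * S - c₂ * S) / 2) := by
  let f : ℤ × ℤ → ℂ := fun z => h (sqNorm z)
  have hswap : ∀ z : ℤ × ℤ, f z.swap = f z := by
    intro z; simp only [f, sqNorm, Prod.fst_swap, Prod.snd_swap, add_comm]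
  let φ : ℤ × ℤ → ℤ × ℤ := fun z => (z.1, 2 * z.2)
  have hφ : Function.Injective φ := by
    rintro ⟨a, b⟩ ⟨c, d⟩ h
    simp only [φ, Prod.mk.injEq] at h ⊢
    omega
  have hφr : ∀ z, z ∈ Set.range φ ↔ Even z.2 := by
    intro z
    rw [even_iff_two_dvd]
    constructor
    · rintro ⟨w, rfl⟩; exact ⟨_, rfl⟩
    · rintro ⟨k, hk⟩; exact ⟨(z.1, k), by ext <;> simp [φ, hk]⟩
  have hA : HasSum (fun z => if Even z.2 then f z else 0) (∑' z, f (φ z)) := by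
    rw [← hφ.hasSum_iff (by intro z hz; rw [hφr] at hz; simp [hz])]
    refine (H.summable.comp_injective hφ).hasSum.congr_fun fun z => ?_
    simp [φ, f]
  have hA' : HasSum (fun z => if Even z.1 then f z else 0) (∑' z, f (φ z)) := by
    rw [← (Equiv.prodComm ℤ ℤ).hasSum_iff]
    refine hA.congr_fun fun z => ?_
    simp [hswap]
  have hB : HasSum (fun z => if Even z.1 ∧ Even z.2 then f z else 0) (c₄ * S) := by
    let ψ : ℤ × ℤ → ℤ × ℤ := fun z => (2 * z.1, 2 * z.2)
    have hψ : Function.Injective ψ := by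
      rintro ⟨a, b⟩ ⟨c, d⟩ h
      simp only [ψ, Prod.mk.injEq] at h ⊢
      omega
    rw [← hψ.hasSum_iff]
    · refine (H.mul_left c₄).congr_fun fun z => ?_
      simp only [Function.comp, ψ, f, ← h4, even_two_mul, and_self, if_true]
      congr 1
      zify
      simp only [sqNorm_cast]
      ring
    · intro z hz
      rw [if_neg]
      rintro ⟨⟨a, ha⟩, ⟨b, hb⟩⟩
      exact hz ⟨(a, b), by ext <;> simp [ψ, ha, hb, two_mul]⟩
  have hC : HasSum (fun z : ℤ × ℤ => if Even (z.1 + z.2) then f z else 0) (c₂ * S) := by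
    rw [← (gmul_injective (a := 1) (b := 1) (by norm_num)).hasSum_iff]
    · refine (H.mul_left c₂).congr_fun fun z => ?_
      have : Even ((gmul 1 1 z).1 + (gmul 1 1 z).2) := ⟨z.1, by simp only [gmul]; ring⟩
      simp only [Function.comp, f, ← h2, if_pos this]
      congr 1
      zify
      simp only [sqNorm_cast, gmul]
      ring
    · intro z hz
      rw [if_neg]
      rintro ⟨a, ha⟩
      exact hz ⟨(a, z.2 - a), by ext <;> simp [gmul]; linarith⟩
  have hsum := (hA.add hA').unique (((H.add (hB.mul_left 2)).sub hC).congr_fun ?_)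
  · have hval : ∑' z, f (φ z) = (S + 2 * c₄ * S - c₂ * S) / 2 := by
      linear_combination hsum / 2
    rw [← hval]
    exact (H.summable.comp_injective hφ).hasSum
  · intro z
    simp only [Int.even_add]
    by_cases h1 : Even z.1 <;> by_cases h2 : Even z.2 <;> (simp [h1, h2, f]; try ring)

theorem zeta_chiNeg4_lattice (t : ℂ) (ht : 1 < t.re) :
    2 * (1 - 3 / (2 : ℂ) ^ t + 2 / (2 : ℂ) ^ (2 * t)) * riemannZeta t *
        dirichletL chiNeg4 t =
      ∑' p : {p : ℤ × ℤ // p ≠ 0},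
        (1 / (((p : ℤ × ℤ).1 : ℂ) ^ 2 + 4 * ((p : ℤ × ℤ).2 : ℂ) ^ 2) ^ t -
          1 / (2 * ((p : ℤ × ℤ).1 : ℂ) ^ 2 + 2 * ((p : ℤ × ℤ).2 : ℂ) ^ 2) ^ t) := by
  have ht0 : t ≠ 0 := by rintro rfl; simp at ht; linarith
  -- Hiding the definition of `h` prevents the unifier from unfolding complex powers.
  obtain ⟨h, hh⟩ : ∃ h : ℕ → ℂ, ∀ n, h n = 1 / (n : ℂ) ^ t := ⟨_, fun _ => rfl⟩
  have h2 : ∀ n : ℕ, h (2 * n) = 1 / (2 : ℂ) ^ t * h n := fun n => by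
    rw [hh, hh]; exact inv_cpow_mul 2 n t
  have h4 : ∀ n : ℕ, h (4 * n) = 1 / (4 : ℂ) ^ t * h n := fun n => by
    rw [hh, hh]; exact inv_cpow_mul 4 n t
  have H := hasSum_sqNorm (h := h) (by simpa only [hh] using hasSum_card_sqReps ht)
  have hE := hasSum_even_second H h2 h4
  have hD := hE.sub (H.mul_left (1 / (2 : ℂ) ^ t))
  have h4t : (4 : ℂ) ^ t = (2 : ℂ) ^ t * (2 : ℂ) ^ t := by
    have := Complex.natCast_mul_natCast_cpow 2 2 t
    norm_num at this ⊢
    exact this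
  have h2t : (2 : ℂ) ^ (2 * t) = (2 : ℂ) ^ t * (2 : ℂ) ^ t := by
    rw [two_mul, Complex.cpow_add _ _ two_ne_zero]
  let F : ℤ × ℤ → ℂ := fun p => 1 / ((p.1 : ℂ) ^ 2 + 4 * (p.2 : ℂ) ^ 2) ^ t -
          1 / (2 * (p.1 : ℂ) ^ 2 + 2 * (p.2 : ℂ) ^ 2) ^ t
  have hF : HasSum F (2 * (1 - 3 / (2 : ℂ) ^ t + 2 / (2 : ℂ) ^ (2 * t)) * riemannZeta t *
        dirichletL chiNeg4 t) := by
    have hval : 2 * (1 - 3 / (2 : ℂ) ^ t + 2 / (2 : ℂ) ^ (2 * t)) * riemannZeta t *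
        dirichletL chiNeg4 t = (4 * (riemannZeta t * dirichletL chiNeg4 t) +
          2 * (1 / (4 : ℂ) ^ t) * (4 * (riemannZeta t * dirichletL chiNeg4 t)) -
          1 / (2 : ℂ) ^ t * (4 * (riemannZeta t * dirichletL chiNeg4 t))) / 2 -
          1 / (2 : ℂ) ^ t * (4 * (riemannZeta t * dirichletL chiNeg4 t)) := by
      rw [h4t, h2t]
      ring
    rw [hval]
    refine hD.congr_fun fun z => ?_
    rw [← h2, hh, hh]
    push_cast [sqNorm_castC]
    simp only [F]
    congr 3 <;> ring
  -- The origin contributes nothing, since `0 ^ t = 0` and `1 / 0 = 0`.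
  have hsupp : Function.support F ⊆ {p | p ≠ 0} := by
    intro p hp h0
    apply hp
    simp [F, h0, Complex.zero_cpow ht0]
  exact ((hasSum_subtype_iff_of_support_subset hsupp).mpr hF).tsum_eq.symm
end

section
/- For every complex t with Re(t) > 1, 2·L(χ_{8}, t)·L(χ_{−3}, t) = Σ′_{m,n} [ 1/(m² + 6n²)^t − 1/(2m² + 3n²)^t ]. -/
/-- The even quadratic Dirichlet character modulo 8. -/
def chi8 (n : ℕ) : ℂ :=
  if n % 8 = 1 ∨ n % 8 = 7 then 1 else if n % 8 = 3 ∨ n % 8 = 5 then -1 else 0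

/-- The quadratic Dirichlet character modulo 3. -/
def chiNeg3 (n : ℕ) : ℂ := if n % 3 = 1 then 1 else if n % 3 = 2 then -1 else 0

/-! ### Representations by `x² + 6y²` -/

/-- The finite set of `(x, y) ∈ ℤ²` with `x² + 6y² = n`. -/
noncomputable def reps (n : ℕ) : Finset (ℤ × ℤ) :=
  (Finset.Icc (-n : ℤ) n ×ˢ Finset.Icc (-n : ℤ) n).filter (fun z => z.1 ^ 2 + 6 * z.2 ^ 2 = n)

/-- The number of representations of `n` by `x² + 6y²`. -/
noncomputable def cnt (n : ℕ) : ℕ := (reps n).card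

lemma mem_reps {n : ℕ} {z : ℤ × ℤ} : z ∈ reps n ↔ z.1 ^ 2 + 6 * z.2 ^ 2 = n := by
  simp only [reps, Finset.mem_filter, Finset.mem_product, Finset.mem_Icc, and_iff_right_iff_imp]
  intro h
  have h1 : |z.1| ≤ z.1 ^ 2 := by
    rw [← sq_abs]; nlinarith [abs_nonneg z.1, Int.le_self_sq |z.1|]
  have h2 : |z.2| ≤ z.2 ^ 2 := by
    rw [← sq_abs]; nlinarith [abs_nonneg z.2, Int.le_self_sq |z.2|]
  have h3 := abs_le.1 (show |z.1| ≤ n by nlinarith [sq_nonneg z.2])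
  have h4 := abs_le.1 (show |z.2| ≤ n by nlinarith [sq_nonneg z.1, sq_nonneg z.2])
  exact ⟨h3, h4⟩

/-- Two counts agree as soon as there are mutually inverse maps between the solution sets. -/
lemma cnt_eq_of_maps {m n : ℕ} (i j : ℤ × ℤ → ℤ × ℤ)
    (hi : ∀ z : ℤ × ℤ, z.1 ^ 2 + 6 * z.2 ^ 2 = m →
      (i z).1 ^ 2 + 6 * (i z).2 ^ 2 = n ∧ j (i z) = z)
    (hj : ∀ z : ℤ × ℤ, z.1 ^ 2 + 6 * z.2 ^ 2 = n →
      (j z).1 ^ 2 + 6 * (j z).2 ^ 2 = m ∧ i (j z) = z) : cnt m = cnt n := by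
  refine Finset.card_nbij' i j ?_ ?_ ?_ ?_
  · intro z hz; exact mem_reps.2 (hi z (mem_reps.1 hz)).1
  · intro z hz; exact mem_reps.2 (hj z (mem_reps.1 hz)).1
  · intro z hz; exact (hi z (mem_reps.1 hz)).2
  · intro z hz; exact (hj z (mem_reps.1 hz)).2

lemma even_fst {x y m : ℤ} (h : x ^ 2 + 6 * y ^ 2 = 2 * m) : (2 : ℤ) ∣ x :=
  Int.prime_two.dvd_of_dvd_pow (n := 2) ⟨m - 3 * y ^ 2, by linarith⟩

lemma three_fst {x y m : ℤ} (h : x ^ 2 + 6 * y ^ 2 = 3 * m) : (3 : ℤ) ∣ x :=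
  Int.prime_three.dvd_of_dvd_pow (n := 2) ⟨m - 2 * y ^ 2, by linarith⟩

/-- Solutions for `4n` have both coordinates even. -/
lemma cnt_four (n : ℕ) : cnt (2 * (2 * n)) = cnt n := by
  symm
  refine cnt_eq_of_maps (fun z => (2 * z.1, 2 * z.2)) (fun z => (z.1 / 2, z.2 / 2)) ?_ ?_
  · rintro ⟨x, y⟩ h
    simp only at h ⊢
    refine ⟨by push_cast; linarith, by simp⟩
  · rintro ⟨x, y⟩ h
    push_cast at h
    simp only at h ⊢
    obtain ⟨u, rfl⟩ := even_fst h
    have : (2 : ℤ) ∣ 3 * y ^ 2 := ⟨n - u ^ 2, by linarith⟩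
    have hy : (2 : ℤ) ∣ y := Int.prime_two.dvd_of_dvd_pow (n := 2) (by omega)
    obtain ⟨v, rfl⟩ := hy
    refine ⟨by simp; linarith, by simp⟩

/-- Both sides count the representations of `n` by `2x² + 3y²`. -/
lemma cnt_three (n : ℕ) : cnt (3 * n) = cnt (2 * n) := by
  refine cnt_eq_of_maps (fun z => (2 * z.2, z.1 / 3)) (fun z => (3 * z.2, z.1 / 2)) ?_ ?_
  · rintro ⟨x, y⟩ h
    push_cast at h
    simp only at h ⊢
    obtain ⟨u, rfl⟩ := three_fst h
    refine ⟨by simp; linarith, by simp⟩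
  · rintro ⟨x, y⟩ h
    push_cast at h
    simp only at h ⊢
    obtain ⟨u, rfl⟩ := even_fst h
    refine ⟨by simp; linarith, by simp⟩

/-- Multiplication by `√-6`. -/
lemma cnt_six (n : ℕ) : cnt (2 * (3 * n)) = cnt n := by
  refine cnt_eq_of_maps (fun z => (z.2, z.1 / 6)) (fun z => (6 * z.2, z.1)) ?_ ?_
  · rintro ⟨x, y⟩ h
    push_cast at h
    simp only at h ⊢
    have h2 := even_fst h
    have h3 : (3 : ℤ) ∣ x := three_fst (m := 2 * n) (y := y) (by linarith)
    obtain ⟨u, rfl⟩ : (6 : ℤ) ∣ x := by omega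
    refine ⟨by simp; linarith, by simp⟩
  · rintro ⟨x, y⟩ h
    simp only at h ⊢
    refine ⟨by push_cast; linarith, by simp⟩

/-- Solutions of `x² + 6y² = pn` with both coordinates divisible by `p` correspond to
solutions of `x² + 6y² = n / p`; there are none when `p ∤ n`. -/
lemma card_divisible {p : ℕ} (hp : p.Prime) (n : ℕ) :
    ((reps (p * n)).filter (fun z => (p : ℤ) ∣ z.1 ∧ (p : ℤ) ∣ z.2)).card =
      if p ∣ n then cnt (n / p) else 0 := by
  have hp0 : (p : ℤ) ≠ 0 := by exact_mod_cast hp.ne_zero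
  split_ifs with h
  · obtain ⟨m, rfl⟩ := h
    rw [Nat.mul_div_cancel_left _ hp.pos]
    refine Finset.card_nbij' (fun z => (z.1 / p, z.2 / p)) (fun z => (p * z.1, p * z.2)) ?_ ?_ ?_ ?_
    · rintro ⟨x, y⟩ hz
      simp only [Finset.coe_filter, Set.mem_ofPred_eq, mem_reps] at hz
      obtain ⟨h, ⟨u, rfl⟩, ⟨v, rfl⟩⟩ := hz
      simp only [Finset.mem_coe, mem_reps, Int.mul_ediv_cancel_left _ hp0]
      push_cast at h
      refine mul_left_cancel₀ (pow_ne_zero 2 hp0) ?_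
      linarith
    · rintro ⟨x, y⟩ hz
      simp only [Finset.mem_coe, mem_reps] at hz
      simp only [Finset.coe_filter, Set.mem_ofPred_eq, mem_reps, dvd_mul_right, and_self, and_true]
      push_cast
      rw [← hz]; ring
    · rintro ⟨x, y⟩ hz
      simp only [Finset.coe_filter, Set.mem_ofPred_eq, mem_reps] at hz
      obtain ⟨h, ⟨u, rfl⟩, ⟨v, rfl⟩⟩ := hz
      simp only [Int.mul_ediv_cancel_left _ hp0]
    · rintro ⟨x, y⟩ hz
      simp only [Int.mul_ediv_cancel_left _ hp0]
  · rw [Finset.card_eq_zero, Finset.filter_eq_empty_iff]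
    rintro ⟨x, y⟩ hz ⟨⟨u, hu⟩, ⟨v, hv⟩⟩
    rw [mem_reps] at hz
    simp only at hz hu hv
    subst hu hv
    apply h
    have : (p : ℤ) ∣ n := by
      refine ⟨u ^ 2 + 6 * v ^ 2, mul_left_cancel₀ hp0 ?_⟩
      push_cast at hz
      linarith
    exact_mod_cast this

/-! ### Representations of `pn` for primes `p ≥ 5` -/

/-- If `-6` is not a square modulo `p`, every solution of `x² + 6y² = pn` is divisible by `p`. -/
lemma cnt_inert {p : ℕ} [Fact p.Prime] (hsq : ¬ IsSquare (-6 : ZMod p)) (n : ℕ) :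
    cnt (p * n) = if p ∣ n then cnt (n / p) else 0 := by
  rw [← card_divisible Fact.out, cnt, Finset.filter_true_of_mem]
  rintro ⟨x, y⟩ hz
  rw [mem_reps] at hz
  have hz' : (x : ZMod p) ^ 2 + 6 * (y : ZMod p) ^ 2 = 0 := by
    have := congrArg (Int.cast : ℤ → ZMod p) hz
    push_cast at this
    simpa using this
  have hy : (y : ZMod p) = 0 := by
    by_contra hy
    refine hsq ⟨x / y, ?_⟩
    field_simp
    linear_combination -hz'
  have hx : (x : ZMod p) = 0 := by
    rw [hy] at hz'
    simpa using hz'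
  exact ⟨(ZMod.intCast_zmod_eq_zero_iff_dvd _ _).1 hx, (ZMod.intCast_zmod_eq_zero_iff_dvd _ _).1 hy⟩

/-- Multiplication by `a + b√-6` followed by division by `k` matches solutions for `kn` with the
solutions for `pn` lying in the sublattice `p ∣ bx - ay`. -/
lemma card_sublattice {p k : ℕ} (hp : p.Prime) (hk : k = 1 ∨ k = 2) {a b : ℤ}
    (hab : a ^ 2 + 6 * b ^ 2 = k * p) (n : ℕ) :
    ((reps (p * n)).filter (fun z => (p : ℤ) ∣ b * z.1 - a * z.2)).card = cnt (k * n) := by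
  have hp0 : (p : ℤ) ≠ 0 := by exact_mod_cast hp.ne_zero
  have hpZ : Prime (p : ℤ) := Nat.prime_iff_prime_int.1 hp
  have hk0 : (k : ℤ) ≠ 0 := by rcases hk with rfl | rfl <;> norm_num
  have hka : (k : ℤ) ∣ a := by
    rcases hk with rfl | rfl
    · simp
    · exact even_fst (m := p) (y := b) (by simpa using hab)
  have key : ∀ x y : ℤ, x ^ 2 + 6 * y ^ 2 = (p * n : ℕ) → (p : ℤ) ∣ b * x - a * y →
      (p : ℤ) ∣ a * x + 6 * b * y := by
    rintro x y h ⟨c, hc⟩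
    push_cast at h
    refine hpZ.dvd_of_dvd_pow (n := 2) ⟨p * (n * k) - 6 * p * c ^ 2, ?_⟩
    linear_combination (a ^ 2 + 6 * b ^ 2) * h + p * n * hab - 6 * (b * x - a * y + p * c) * hc
  have key2 : ∀ u v : ℤ, u ^ 2 + 6 * v ^ 2 = (k * n : ℕ) →
      (k : ℤ) ∣ a * u - 6 * b * v ∧ (k : ℤ) ∣ b * u + a * v := by
    intro u v h
    rcases hk with rfl | rfl
    · simp
    · have hu : (2 : ℤ) ∣ u := even_fst (m := n) (y := v) (by simpa using h)
      exact ⟨dvd_sub (dvd_mul_of_dvd_left hka _) ⟨3 * b * v, by push_cast; ring⟩,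
        dvd_add (dvd_mul_of_dvd_right hu _) (dvd_mul_of_dvd_left hka _)⟩
  refine Finset.card_nbij'
    (fun z => ((a * z.1 + 6 * b * z.2) / p, -((b * z.1 - a * z.2) / p)))
    (fun z => ((a * z.1 - 6 * b * z.2) / k, (b * z.1 + a * z.2) / k)) ?_ ?_ ?_ ?_
  · rintro ⟨x, y⟩ hz
    simp only [Finset.coe_filter, Set.mem_ofPred_eq, mem_reps] at hz
    obtain ⟨h, hd⟩ := hz
    obtain ⟨d, hd'⟩ := key x y h hd
    obtain ⟨c, hc⟩ := hd
    simp only [Finset.mem_coe, mem_reps, hc, hd', Int.mul_ediv_cancel_left _ hp0]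
    push_cast at h ⊢
    refine mul_left_cancel₀ (pow_ne_zero 2 hp0) ?_
    linear_combination (a ^ 2 + 6 * b ^ 2) * h + p * n * hab - 6 * (b * x - a * y + p * c) * hc
      - (a * x + 6 * b * y + p * d) * hd'
  · rintro ⟨u, v⟩ hz
    simp only [Finset.mem_coe, mem_reps] at hz
    obtain ⟨⟨c, hc⟩, ⟨d, hd⟩⟩ := key2 u v hz
    simp only [Finset.coe_filter, Set.mem_ofPred_eq, mem_reps, hc, hd,
      Int.mul_ediv_cancel_left _ hk0]
    push_cast at hz ⊢
    constructor
    · refine mul_left_cancel₀ (pow_ne_zero 2 hk0) ?_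
      linear_combination (a ^ 2 + 6 * b ^ 2) * hz + k * n * hab
        - 6 * (b * u + a * v + k * d) * hd - (a * u - 6 * b * v + k * c) * hc
    · refine ⟨-v, mul_left_cancel₀ hk0 ?_⟩
      linear_combination a * hd - b * hc - v * hab
  · rintro ⟨x, y⟩ hz
    simp only [Finset.coe_filter, Set.mem_ofPred_eq, mem_reps] at hz
    obtain ⟨h, hd⟩ := hz
    obtain ⟨d, hd'⟩ := key x y h hd
    obtain ⟨c, hc⟩ := hd
    simp only [hc, hd', Int.mul_ediv_cancel_left _ hp0]
    have e1 : a * d - 6 * b * -c = k * x := by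
      refine mul_left_cancel₀ hp0 ?_
      linear_combination x * hab - a * hd' - 6 * b * hc
    have e2 : b * d + a * -c = k * y := by
      refine mul_left_cancel₀ hp0 ?_
      linear_combination y * hab - b * hd' + a * hc
    rw [e1, e2, Int.mul_ediv_cancel_left _ hk0, Int.mul_ediv_cancel_left _ hk0]
  · rintro ⟨u, v⟩ hz
    simp only [Finset.mem_coe, mem_reps] at hz
    obtain ⟨⟨c, hc⟩, ⟨d, hd⟩⟩ := key2 u v hz
    simp only [hc, hd, Int.mul_ediv_cancel_left _ hk0]
    have e1 : a * c + 6 * b * d = p * u := by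
      refine mul_left_cancel₀ hk0 ?_
      linear_combination u * hab - a * hc - 6 * b * hd
    have e2 : b * c - a * d = p * (-v) := by
      refine mul_left_cancel₀ hk0 ?_
      linear_combination -v * hab - b * hc + a * hd
    rw [e1, e2, Int.mul_ediv_cancel_left _ hp0, Int.mul_ediv_cancel_left _ hp0, neg_neg]

/-- The split case: the solutions of `x² + 6y² = pn` are covered by two conjugate sublattices of
index `p`, whose intersection is `pℤ²`. -/
lemma cnt_split {p k : ℕ} (hp : p.Prime) (hp5 : 5 ≤ p) (hk : k = 1 ∨ k = 2) {a b : ℤ}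
    (hab : a ^ 2 + 6 * b ^ 2 = k * p) (n : ℕ) :
    cnt (p * n) + (if p ∣ n then cnt (n / p) else 0) = 2 * cnt (k * n) := by
  have hp0 : (p : ℤ) ≠ 0 := by exact_mod_cast hp.ne_zero
  have hpZ : Prime (p : ℤ) := Nat.prime_iff_prime_int.1 hp
  have small : ∀ c : ℤ, 0 < c → c < 5 → ¬ (p : ℤ) ∣ c := by
    intro c h0 h5 h
    have := Int.le_of_dvd h0 h
    omega
  have hp6 : ¬ (p : ℤ) ∣ 6 := by
    intro h
    rcases hpZ.dvd_or_dvd (show (p : ℤ) ∣ 2 * 3 by simpa using h) with h | h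
    · exact small 2 (by norm_num) (by norm_num) h
    · exact small 3 (by norm_num) (by norm_num) h
  have hnot : ¬ ((p : ℤ) ∣ a ∧ (p : ℤ) ∣ b) := by
    rintro ⟨⟨u, rfl⟩, ⟨v, rfl⟩⟩
    refine small k (by rcases hk with rfl | rfl <;> norm_num)
      (by rcases hk with rfl | rfl <;> norm_num) ⟨u ^ 2 + 6 * v ^ 2, mul_left_cancel₀ hp0 ?_⟩
    linear_combination -hab
  have hb : ¬ (p : ℤ) ∣ b := by
    intro h
    refine hnot ⟨hpZ.dvd_of_dvd_pow (n := 2) ?_, h⟩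
    rw [show a ^ 2 = k * p - 6 * b * b by linear_combination hab]
    exact dvd_sub (dvd_mul_left _ _) (dvd_mul_of_dvd_right h _)
  have ha : ¬ (p : ℤ) ∣ a := by
    intro h
    have h6 : (p : ℤ) ∣ 6 * b ^ 2 := by
      rw [show 6 * b ^ 2 = k * p - a * a by linear_combination hab]
      exact dvd_sub (dvd_mul_left _ _) (dvd_mul_of_dvd_right h _)
    rcases hpZ.dvd_or_dvd h6 with h6 | h6
    · exact hp6 h6
    · exact hb (hpZ.dvd_of_dvd_pow h6)
  have hA := card_sublattice hp hk hab n
  have hB := card_sublattice (a := -a) hp hk (by simpa using hab) n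
  rw [two_mul, ← card_divisible hp]
  nth_rewrite 1 [← hA]
  rw [← hB, ← Finset.card_union_add_card_inter, ← Finset.filter_or, ← Finset.filter_and, cnt]
  congr 2
  · rw [Finset.filter_true_of_mem]
    rintro ⟨x, y⟩ hz
    rw [mem_reps] at hz
    push_cast at hz
    simp only at hz ⊢
    refine hpZ.dvd_or_dvd ⟨b ^ 2 * n - k * y ^ 2, ?_⟩
    linear_combination b ^ 2 * hz - y ^ 2 * hab
  · refine Finset.filter_congr ?_
    rintro ⟨x, y⟩ -
    simp only
    constructor
    · rintro ⟨h1, h2⟩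
      exact ⟨dvd_sub (dvd_mul_of_dvd_right h1 _) (dvd_mul_of_dvd_right h2 _),
          dvd_sub (dvd_mul_of_dvd_right h1 _) (dvd_mul_of_dvd_right h2 _)⟩
    · rintro ⟨h1, h2⟩
      have hx : (p : ℤ) ∣ (2 * b) * x := by
        rw [show (2 * b) * x = (b * x - a * y) + (b * x - -a * y) by ring]; exact dvd_add h1 h2
      have hy : (p : ℤ) ∣ (2 * a) * y := by
        rw [show (2 * a) * y = (b * x - -a * y) - (b * x - a * y) by ring]; exact dvd_sub h2 h1
      have h2' := small 2 (by norm_num) (by norm_num)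
      constructor
      · rcases hpZ.dvd_or_dvd hx with h | h
        · exact ((hpZ.dvd_or_dvd h).elim h2' hb).elim
        · exact h
      · rcases hpZ.dvd_or_dvd hy with h | h
        · exact ((hpZ.dvd_or_dvd h).elim h2' ha).elim
        · exact h

/-- If `-6` is a square modulo `p`, then `p` or `2p` is of the form `a² + 6b²`: Thue's
pigeonhole argument represents one of `p, 2p, …, 6p`, and each case reduces to `p` or `2p`. -/
lemma exists_rep {p : ℕ} [Fact p.Prime] (hsq : IsSquare (-6 : ZMod p)) :
    ∃ k : ℕ, (k = 1 ∨ k = 2) ∧ ∃ a b : ℤ, a ^ 2 + 6 * b ^ 2 = k * p := by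
  have hp : p.Prime := Fact.out
  have hpZ : Prime (p : ℤ) := Nat.prime_iff_prime_int.1 hp
  obtain ⟨s, hs⟩ := hsq
  set K := Nat.sqrt p with hK
  have hK1 : p < (K + 1) * (K + 1) := Nat.lt_succ_sqrt p
  have hK2 : K * K ≤ p := Nat.sqrt_le p
  have hK3 : K * K ≠ p := fun h => hp.prime.not_isSquare ⟨K, h.symm⟩
  obtain ⟨z, hz, w, hw, hne, heq⟩ := Finset.exists_ne_map_eq_of_card_lt_of_maps_to
    (s := Finset.range (K + 1) ×ˢ Finset.range (K + 1)) (t := (Finset.univ : Finset (ZMod p)))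
    (f := fun z => (z.1 : ZMod p) - s * z.2) (by simpa [ZMod.card] using hK1)
    (fun _ _ => by simp)
  simp only [Finset.mem_product, Finset.mem_range] at hz hw
  obtain ⟨x, hx⟩ : ∃ x : ℤ, x = z.1 - w.1 := ⟨_, rfl⟩
  obtain ⟨y, hy⟩ : ∃ y : ℤ, y = z.2 - w.2 := ⟨_, rfl⟩
  have hxy : x ≠ 0 ∨ y ≠ 0 := by
    by_contra! h
    exact hne (Prod.ext (by omega) (by omega))
  have hx2 : x ^ 2 ≤ K * K := by
    nlinarith [show x ≤ K by omega, show -K ≤ x by omega]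
  have hy2 : y ^ 2 ≤ K * K := by
    nlinarith [show y ≤ K by omega, show -K ≤ y by omega]
  have hKp : (K : ℤ) * K < p := by exact_mod_cast lt_of_le_of_ne hK2 hK3
  have hdvd : (p : ℤ) ∣ x ^ 2 + 6 * y ^ 2 := by
    rw [← ZMod.intCast_zmod_eq_zero_iff_dvd]
    have : (x : ZMod p) = s * y := by
      rw [hx, hy]; push_cast; linear_combination heq
    push_cast
    rw [this]
    linear_combination -(y : ZMod p) ^ 2 * hs
  obtain ⟨c, hc⟩ := hdvd
  have hpos : 0 < x ^ 2 + 6 * y ^ 2 := by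
    rcases hxy with h | h
    · have := pow_pos (abs_pos.2 h) 2
      rw [sq_abs] at this; nlinarith [sq_nonneg y]
    · have := pow_pos (abs_pos.2 h) 2
      rw [sq_abs] at this; nlinarith [sq_nonneg x]
  have hp0 : (0 : ℤ) < p := by exact_mod_cast hp.pos
  have hc0 : 0 < c := by
    rw [hc] at hpos; exact pos_of_mul_pos_right hpos hp0.le
  have hc7 : c < 7 := by
    by_contra! h
    nlinarith
  interval_cases c
  · exact ⟨1, .inl rfl, x, y, by push_cast; linarith⟩
  · exact ⟨2, .inr rfl, x, y, by push_cast; linarith⟩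
  · obtain ⟨u, rfl⟩ := three_fst (m := p) (x := x) (y := y) (by linarith)
    exact ⟨2, .inr rfl, 2 * y, u, by push_cast; linarith⟩
  · obtain ⟨u, rfl⟩ := even_fst (m := 2 * p) (x := x) (y := y) (by linarith)
    have : (2 : ℤ) ∣ 3 * y ^ 2 := ⟨p - u ^ 2, by linarith⟩
    obtain ⟨v, rfl⟩ : (2 : ℤ) ∣ y := Int.prime_two.dvd_of_dvd_pow (n := 2) (by omega)
    exact ⟨1, .inl rfl, u, v, by push_cast; linarith⟩
  · have h5 : Prime (5 : ℤ) := Nat.prime_iff_prime_int.1 (by norm_num)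
    -- `5 ∣ (x - 2y)(x + 2y)`; multiplying by `2 ± √-6`, of norm 10, and dividing
    -- by 5 turns the representation of `5p` into one of `2p`
    have : (5 : ℤ) ∣ (x - 2 * y) * (x + 2 * y) := ⟨p - 2 * y ^ 2, by linarith⟩
    rcases h5.dvd_or_dvd this with ⟨t, ht⟩ | ⟨t, ht⟩
    · refine ⟨2, .inr rfl, 2 * (y + t), t, ?_⟩
      obtain rfl : x = 2 * y + 5 * t := by linarith
      push_cast; linarith
    · refine ⟨2, .inr rfl, 2 * (y - t), t, ?_⟩
      obtain rfl : x = -2 * y + 5 * t := by linarith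
      push_cast; linarith
  · have h2 := even_fst (m := 3 * p) (x := x) (y := y) (by linarith)
    have h3 := three_fst (m := 2 * p) (x := x) (y := y) (by linarith)
    obtain ⟨u, rfl⟩ : (6 : ℤ) ∣ x := by omega
    exact ⟨1, .inl rfl, y, u, by push_cast; linarith⟩

/-! ### Values of the characters -/

lemma chi8_mul (a b : ℕ) : chi8 (a * b) = chi8 a * chi8 b := by
  have ha : a % 8 < 8 := Nat.mod_lt _ (by norm_num)
  have hb : b % 8 < 8 := Nat.mod_lt _ (by norm_num)
  unfold chi8
  rw [Nat.mul_mod]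
  generalize a % 8 = r at *
  generalize b % 8 = q at *
  interval_cases r <;> interval_cases q <;> norm_num

lemma chiNeg3_mul (a b : ℕ) : chiNeg3 (a * b) = chiNeg3 a * chiNeg3 b := by
  have ha : a % 3 < 3 := Nat.mod_lt _ (by norm_num)
  have hb : b % 3 < 3 := Nat.mod_lt _ (by norm_num)
  unfold chiNeg3
  rw [Nat.mul_mod]
  generalize a % 3 = r at *
  generalize b % 3 = q at *
  interval_cases r <;> interval_cases q <;> norm_num

/-- If `p = a² + 6b²` both characters are `1` at `p`; if `2p = a² + 6b²`, that is
`p = 2(a/2)² + 3b²`, both are `-1`. -/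
lemma chi_split {p k : ℕ} (hp : p.Prime) (hp5 : 5 ≤ p) (hk : k = 1 ∨ k = 2) {a b : ℤ}
    (hab : a ^ 2 + 6 * b ^ 2 = k * p) :
    chi8 p = (if k = 1 then 1 else -1) ∧ chiNeg3 p = (if k = 1 then 1 else -1) := by
  have h2 : p % 2 ≠ 0 := fun h => by
    have := (Nat.prime_dvd_prime_iff_eq Nat.prime_two hp).1 (Nat.dvd_of_mod_eq_zero h); omega
  have h3 : p % 3 ≠ 0 := fun h => by
    have := (Nat.prime_dvd_prime_iff_eq Nat.prime_three hp).1 (Nat.dvd_of_mod_eq_zero h); omega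
  have sq8 : ∀ c : ℤ, c ^ 2 % 8 = 0 ∨ c ^ 2 % 8 = 1 ∨ c ^ 2 % 8 = 4 := by
    intro c
    have h0 := Int.emod_nonneg c (show (8 : ℤ) ≠ 0 by norm_num)
    have h8 := Int.emod_lt_of_pos c (show (0 : ℤ) < 8 by norm_num)
    rw [pow_two, Int.mul_emod]
    generalize c % 8 = r at *
    interval_cases r <;> simp
  have sq3 : ∀ c : ℤ, c ^ 2 % 3 = 0 ∨ c ^ 2 % 3 = 1 := by
    intro c
    have h0 := Int.emod_nonneg c (show (3 : ℤ) ≠ 0 by norm_num)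
    have h8 := Int.emod_lt_of_pos c (show (0 : ℤ) < 3 by norm_num)
    rw [pow_two, Int.mul_emod]
    generalize c % 3 = r at *
    interval_cases r <;> simp
  rcases hk with rfl | rfl
  · have a8 := sq8 a
    have b8 := sq8 b
    have a3 := sq3 a
    have e8 : p % 8 = 1 ∨ p % 8 = 7 := by push_cast at hab; omega
    have e3 : p % 3 = 1 := by push_cast at hab; omega
    simp [chi8, chiNeg3, e8, e3]
  · obtain ⟨u, rfl⟩ := even_fst (m := p) (x := a) (y := b) (by simpa using hab)
    have hu : 2 * u ^ 2 + 3 * b ^ 2 = p := by push_cast at hab; linarith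
    have a8 := sq8 u
    have b8 := sq8 b
    have a3 := sq3 u
    have e8 : p % 8 = 3 ∨ p % 8 = 5 := by omega
    have e8' : ¬ (p % 8 = 1 ∨ p % 8 = 7) := by omega
    have e3 : p % 3 = 2 := by omega
    simp [chi8, chiNeg3, e8, e8', e3]

/-- By quadratic reciprocity the characters take opposite nonzero values at a prime modulo which
`-6` is not a square. -/
lemma chi_inert {p : ℕ} [Fact p.Prime] (hp5 : 5 ≤ p) (hsq : ¬ IsSquare (-6 : ZMod p)) :
    chi8 p + chiNeg3 p = 0 ∧ chi8 p * chiNeg3 p = -1 := by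
  have hp : p.Prime := Fact.out
  have h2 : p % 2 ≠ 0 := fun h => by
    have := (Nat.prime_dvd_prime_iff_eq Nat.prime_two hp).1 (Nat.dvd_of_mod_eq_zero h); omega
  have h3 : p % 3 ≠ 0 := fun h => by
    have := (Nat.prime_dvd_prime_iff_eq Nat.prime_three hp).1 (Nat.dvd_of_mod_eq_zero h); omega
  have hJ : jacobiSym (-6) (p % 24) = -1 := by
    have h : legendreSym p (-6) = -1 := (legendreSym.eq_neg_one_iff p).2 (by simpa using hsq)
    rw [jacobiSym.legendreSym.to_jacobiSym, jacobiSym.mod_right _ (Nat.odd_iff.2 (by omega))] at h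
    simpa using h
  have h24 : p % 24 < 24 := Nat.mod_lt _ (by norm_num)
  have e8 : p % 8 = p % 24 % 8 := by omega
  have e3 : p % 3 = p % 24 % 3 := by omega
  have e2 : p % 2 = p % 24 % 2 := by omega
  unfold chi8 chiNeg3
  rw [e8, e3]
  rw [e2] at h2
  rw [e3] at h3
  generalize p % 24 = r at *
  interval_cases r <;> first | (exact absurd rfl h2) | (exact absurd rfl h3) | (norm_num at hJ; done) | norm_num

/-! ### The Hecke recursions -/

/-- The difference of the representation numbers of `n` by `x² + 6y²` and `2x² + 3y²`; the latter is
`cnt (2 * n)`, because `x² + 6y² = 2n` forces `x` to be even. -/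
noncomputable def reprDiff (n : ℕ) : ℂ := (cnt n : ℂ) - cnt (2 * n)

lemma reprDiff_hecke {p : ℕ} (hp : p.Prime) (n : ℕ) :
    reprDiff (p * n) = (chi8 p + chiNeg3 p) * reprDiff n -
      chi8 p * chiNeg3 p * (if p ∣ n then reprDiff (n / p) else 0) := by
  have := Fact.mk hp
  rcases hp.two_le.eq_or_lt with rfl | h2
  · simp [reprDiff, cnt_four, chi8, chiNeg3]
  rcases (show 3 ≤ p from h2).eq_or_lt with rfl | h3
  · simp [reprDiff, cnt_three, cnt_six, chi8, chiNeg3]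
  have hp5 : 5 ≤ p := by
    rcases (show 4 ≤ p from h3).eq_or_lt with rfl | h
    · norm_num at hp
    · exact h
  have hd : p ∣ 2 * n ↔ p ∣ n := by
    refine ⟨fun h => (hp.dvd_mul.1 h).resolve_left fun h => ?_, fun h => dvd_mul_of_dvd_right h _⟩
    have := Nat.le_of_dvd (by norm_num) h
    omega
  have hdiv : p ∣ n → 2 * n / p = 2 * (n / p) := fun h => Nat.mul_div_assoc _ h
  by_cases hsq : IsSquare (-6 : ZMod p)
  · obtain ⟨k, hk, a, b, hab⟩ := exists_rep hsq
    obtain ⟨h8, h3⟩ := chi_split hp hp5 hk hab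
    have e1 := congrArg (Nat.cast : ℕ → ℂ) (cnt_split hp hp5 hk hab n)
    have e2 := congrArg (Nat.cast : ℕ → ℂ) (cnt_split hp hp5 hk hab (2 * n))
    rw [show p * (2 * n) = 2 * (p * n) by ring] at e2
    simp only [hd] at e2
    rw [h8, h3]
    clear h8 h3
    rcases hk with rfl | rfl
    · rw [if_pos rfl]
      split_ifs at * with h
      · rw [hdiv h] at e2
        push_cast at e1 e2
        simp only [one_mul] at e1 e2
        unfold reprDiff
        linear_combination e1 - e2
      · push_cast at e1 e2
        simp only [one_mul] at e1 e2
        unfold reprDiff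
        linear_combination e1 - e2
    · rw [cnt_four] at e2
      rw [if_neg (by norm_num)]
      split_ifs at * with h
      · rw [hdiv h] at e2
        push_cast at e1 e2
        unfold reprDiff
        linear_combination e1 - e2
      · push_cast at e1 e2
        unfold reprDiff
        linear_combination e1 - e2
  · obtain ⟨hs, hm⟩ := chi_inert hp5 hsq
    have e1 := cnt_inert hsq n
    have e2 := cnt_inert hsq (2 * n)
    rw [show p * (2 * n) = 2 * (p * n) by ring] at e2
    simp only [hd] at e2
    rw [hs, hm, reprDiff, e1, e2]
    split_ifs with h
    · simp only [hdiv h, reprDiff]; ring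
    · simp

/-- The Dirichlet convolution `Σ_{de = n} χ₈(d) χ₋₃(e)`. -/
noncomputable def chiConv (n : ℕ) : ℂ := ∑ d ∈ n.divisorsAntidiagonal, chi8 d.1 * chiNeg3 d.2

/-- The part of the convolution at `pn` with `p ∣ d`. -/
lemma sum_dvd_fst {p : ℕ} (hp : p.Prime) (n : ℕ) :
    ∑ d ∈ (p * n).divisorsAntidiagonal with p ∣ d.1, chi8 d.1 * chiNeg3 d.2 =
      chi8 p * chiConv n := by
  rw [chiConv, Finset.mul_sum]
  symm
  refine Finset.sum_bij' (fun d _ => (p * d.1, d.2)) (fun d _ => (d.1 / p, d.2)) ?_ ?_ ?_ ?_ ?_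
  · rintro ⟨d, e⟩ h
    simp only [Nat.mem_divisorsAntidiagonal, Finset.mem_filter] at h ⊢
    exact ⟨⟨by rw [← h.1]; ring, mul_ne_zero hp.ne_zero h.2⟩, dvd_mul_right _ _⟩
  · rintro ⟨d, e⟩ h
    simp only [Nat.mem_divisorsAntidiagonal, Finset.mem_filter] at h ⊢
    obtain ⟨⟨h1, h2⟩, ⟨u, rfl⟩⟩ := h
    rw [Nat.mul_div_cancel_left _ hp.pos]
    exact ⟨Nat.eq_of_mul_eq_mul_left hp.pos (by rw [← h1]; ring), right_ne_zero_of_mul h2⟩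
  · rintro ⟨d, e⟩ h
    simp [hp.pos]
  · rintro ⟨d, e⟩ h
    simp only [Nat.mem_divisorsAntidiagonal, Finset.mem_filter] at h ⊢
    rw [Nat.mul_div_cancel' h.2]
  · rintro ⟨d, e⟩ h
    simp only [chi8_mul]; ring

/-- The part with `p ∤ d`: then `p` divides the other factor `e`. -/
lemma sum_not_dvd_fst {p : ℕ} (hp : p.Prime) (n : ℕ) :
    ∑ d ∈ (p * n).divisorsAntidiagonal with ¬ p ∣ d.1, chi8 d.1 * chiNeg3 d.2 =
      chiNeg3 p * ∑ d ∈ n.divisorsAntidiagonal with ¬ p ∣ d.1, chi8 d.1 * chiNeg3 d.2 := by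
  rw [Finset.mul_sum]
  symm
  refine Finset.sum_bij' (fun d _ => (d.1, p * d.2)) (fun d _ => (d.1, d.2 / p)) ?_ ?_ ?_ ?_ ?_
  · rintro ⟨d, e⟩ h
    simp only [Nat.mem_divisorsAntidiagonal, Finset.mem_filter] at h ⊢
    exact ⟨⟨by rw [← h.1.1]; ring, mul_ne_zero hp.ne_zero h.1.2⟩, h.2⟩
  · rintro ⟨d, e⟩ h
    simp only [Nat.mem_divisorsAntidiagonal, Finset.mem_filter] at h ⊢
    obtain ⟨⟨h1, h2⟩, h3⟩ := h
    obtain ⟨u, rfl⟩ := (hp.dvd_mul.1 (Dvd.intro _ h1.symm)).resolve_left h3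
    rw [Nat.mul_div_cancel_left _ hp.pos]
    exact ⟨⟨Nat.eq_of_mul_eq_mul_left hp.pos (by rw [← h1]; ring), right_ne_zero_of_mul h2⟩, h3⟩
  · rintro ⟨d, e⟩ h
    simp [hp.pos]
  · rintro ⟨d, e⟩ h
    simp only [Nat.mem_divisorsAntidiagonal, Finset.mem_filter] at h ⊢
    rw [Nat.mul_div_cancel' ((hp.dvd_mul.1 (Dvd.intro _ h.1.1.symm)).resolve_left h.2)]
  · rintro ⟨d, e⟩ h
    simp only [chiNeg3_mul]; ring

lemma chiConv_hecke {p : ℕ} (hp : p.Prime) (n : ℕ) :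
    chiConv (p * n) = (chi8 p + chiNeg3 p) * chiConv n -
      chi8 p * chiNeg3 p * (if p ∣ n then chiConv (n / p) else 0) := by
  have key : ∑ d ∈ n.divisorsAntidiagonal with p ∣ d.1, chi8 d.1 * chiNeg3 d.2 =
      chi8 p * (if p ∣ n then chiConv (n / p) else 0) := by
    split_ifs with h
    · obtain ⟨m, rfl⟩ := h
      rw [sum_dvd_fst hp, Nat.mul_div_cancel_left _ hp.pos]
    · rw [mul_zero]
      refine Finset.sum_eq_zero fun d hd => ?_
      simp only [Nat.mem_divisorsAntidiagonal, Finset.mem_filter] at hd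
      exact absurd (hd.2.trans (Dvd.intro _ hd.1.1)) h
  have h1 : chiConv (p * n) = _ := (Finset.sum_filter_add_sum_filter_not _ (fun d => p ∣ d.1) _).symm
  have h2 : chiConv n = _ := (Finset.sum_filter_add_sum_filter_not _ (fun d => p ∣ d.1) _).symm
  rw [sum_dvd_fst hp, sum_not_dvd_fst hp] at h1
  rw [key] at h2
  rw [h1]
  linear_combination -chiNeg3 p * h2

/-- Equality of the `n`-th Dirichlet coefficients: induction on `n` along the Hecke recursion at its
least prime factor. -/
lemma reprDiff_eq (n : ℕ) (hn : n ≠ 0) : reprDiff n = 2 * chiConv n := by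
  induction n using Nat.strong_induction_on with
  | _ n ih =>
    rcases eq_or_ne n 1 with rfl | h1
    · have c1 : cnt 1 = 2 := by decide
      have c2 : cnt 2 = 0 := by decide
      simp [reprDiff, chiConv, c1, c2, chi8, chiNeg3]
    · have hp := Nat.minFac_prime h1
      obtain ⟨m, hm⟩ := Nat.minFac_dvd n
      generalize n.minFac = p at *
      subst hm
      have hm0 : m ≠ 0 := right_ne_zero_of_mul hn
      have hlt : m < p * m := lt_mul_of_one_lt_left (Nat.pos_of_ne_zero hm0) hp.one_lt
      rw [reprDiff_hecke hp, chiConv_hecke hp, ih m hlt hm0]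
      split_ifs with h
      · rw [ih (m / p) ((Nat.div_le_self _ _).trans_lt hlt)
          (Nat.div_pos (Nat.le_of_dvd (Nat.pos_of_ne_zero hm0) h) hp.pos).ne']
        ring
      · ring

/-! ### Dirichlet series and lattice sums -/

/-- A Dirichlet series grouped by the values of a form `q`: the terms with value `n`
contribute `n⁻ᵗ` times the number of representations of `n`. The zero vector contributes
`1 / 0 ^ t = 0`. -/
lemma hasSum_fiber {t : ℂ} (ht : t ≠ 0) (q : ℤ × ℤ → ℕ) (c : ℕ → ℕ)
    (hc : ∀ n, ∃ s : Finset (ℤ × ℤ), (∀ z, z ∈ s ↔ q z = n) ∧ s.card = c n)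
    (hs : Summable fun z => 1 / (q z : ℂ) ^ t) :
    HasSum (fun n => LSeries.term (fun n => (c n : ℂ)) t n) (∑' z, 1 / (q z : ℂ) ^ t) := by
  suffices key : (fun n => LSeries.term (fun n => (c n : ℂ)) t n) =
      fun n => ∑' z : (q ⁻¹' {n} : Set (ℤ × ℤ)), 1 / (q z : ℂ) ^ t by
    rw [key]
    exact hs.hasSum.tsum_fiberwise q
  funext n
  obtain ⟨s, hs, hcard⟩ := hc n
  have hset : q ⁻¹' {n} = (s : Set (ℤ × ℤ)) := by
    ext z; simp [hs]
  rw [hset, Finset.tsum_subtype' s (fun z => 1 / (q z : ℂ) ^ t),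
    Finset.sum_congr rfl (fun z hz => by rw [(hs z).1 hz]), Finset.sum_const, hcard,
    LSeries.term_def, nsmul_eq_mul]
  split_ifs with h
  · simp [h, Complex.zero_cpow ht]
  · ring

/-- Comparison with the sum of `‖v‖ ^ (-2 Re t)` over `v ∈ ℤ²` in the sup norm. -/
lemma summable_form {t : ℂ} (ht : 1 < t.re) (q : ℤ × ℤ → ℕ)
    (hq : ∀ z : ℤ × ℤ, z.1 ^ 2 ≤ (q z : ℤ) ∧ z.2 ^ 2 ≤ (q z : ℤ)) (hq0 : q 0 = 0) :
    Summable fun z => 1 / (q z : ℂ) ^ t := by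
  have h := EisensteinSeries.summable_one_div_norm_rpow (k := 2 * t.re) (by linarith)
  rw [← (finTwoArrowEquiv ℤ).symm.summable_iff] at h
  refine Summable.of_norm_bounded h ?_
  intro z
  simp only [Function.comp_apply, finTwoArrowEquiv_symm_apply]
  have ht0 : t ≠ 0 := by rintro rfl; simp at ht; linarith
  rcases Nat.eq_zero_or_pos (q z) with h0 | h0
  · rw [h0, Nat.cast_zero, Complex.zero_cpow ht0]
    simp only [div_zero, norm_zero]
    positivity
  · have hz : (![z.1, z.2] : Fin 2 → ℤ) ≠ 0 := by
      intro h
      have h1 : z.1 = 0 := congrFun h 0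
      have h2 : z.2 = 0 := congrFun h 1
      rw [show z = 0 from Prod.ext h1 h2, hq0] at h0
      exact h0.false
    have hle : ‖(![z.1, z.2] : Fin 2 → ℤ)‖ ≤ Real.sqrt (q z) := by
      refine (pi_norm_le_iff_of_nonneg (Real.sqrt_nonneg _)).2 ?_
      intro i
      fin_cases i
      · refine Real.le_sqrt_of_sq_le ?_
        simp only [Fin.zero_eta, Matrix.cons_val_zero, Int.norm_eq_abs, sq_abs]
        exact_mod_cast (hq z).1
      · refine Real.le_sqrt_of_sq_le ?_
        simp only [Fin.mk_one, Matrix.cons_val_one, Int.norm_eq_abs, sq_abs]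
        exact_mod_cast (hq z).2
    rw [norm_div, norm_one, Complex.norm_natCast_cpow_of_pos h0, Real.rpow_neg (norm_nonneg _),
      ← one_div]
    refine one_div_le_one_div_of_le (Real.rpow_pos_of_pos (norm_pos_iff.2 hz) _) ?_
    calc _ ≤ Real.sqrt (q z) ^ (2 * t.re) :=
          Real.rpow_le_rpow (norm_nonneg _) hle (by linarith)
      _ = (q z : ℝ) ^ t.re := by
          rw [Real.rpow_mul (Real.sqrt_nonneg _), Real.rpow_two, Real.sq_sqrt (Nat.cast_nonneg _)]

lemma dirichletL_eq {χ : ℕ → ℂ} (h0 : χ 0 = 0) (t : ℂ) : dirichletL χ t = LSeries χ t := by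
  refine tsum_congr fun n => ?_
  rw [LSeries.term_def]
  split_ifs with h <;> simp [h, h0]

lemma chi8_summable {t : ℂ} (ht : 1 < t.re) : LSeriesSummable chi8 t := by
  refine LSeriesSummable_of_bounded_of_one_lt_re (m := 1) (fun n _ => ?_) ht
  unfold chi8
  split_ifs <;> simp

lemma chiNeg3_summable {t : ℂ} (ht : 1 < t.re) : LSeriesSummable chiNeg3 t := by
  refine LSeriesSummable_of_bounded_of_one_lt_re (m := 1) (fun n _ => ?_) ht
  unfold chiNeg3
  split_ifs <;> simp

theorem chi8_chiNeg3_lattice (t : ℂ) (ht : 1 < t.re) :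
    2 * dirichletL chi8 t * dirichletL chiNeg3 t =
      ∑' p : {p : ℤ × ℤ // p ≠ 0},
        (1 / (((p : ℤ × ℤ).1 : ℂ) ^ 2 + 6 * ((p : ℤ × ℤ).2 : ℂ) ^ 2) ^ t -
          1 / (2 * ((p : ℤ × ℤ).1 : ℂ) ^ 2 + 3 * ((p : ℤ × ℤ).2 : ℂ) ^ 2) ^ t) := by
  have ht0 : t ≠ 0 := by rintro rfl; simp at ht; linarith
  set q₁ : ℤ × ℤ → ℕ := fun z => (z.1 ^ 2 + 6 * z.2 ^ 2).toNat with hq₁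
  set q₂ : ℤ × ℤ → ℕ := fun z => (2 * z.1 ^ 2 + 3 * z.2 ^ 2).toNat with hq₂
  have c₁ : ∀ z, (q₁ z : ℤ) = z.1 ^ 2 + 6 * z.2 ^ 2 := fun z => Int.toNat_of_nonneg (by positivity)
  have c₂ : ∀ z, (q₂ z : ℤ) = 2 * z.1 ^ 2 + 3 * z.2 ^ 2 :=
    fun z => Int.toNat_of_nonneg (by positivity)
  have s₁ := summable_form ht q₁ (fun z => by
    rw [c₁]; constructor <;> nlinarith [sq_nonneg z.1, sq_nonneg z.2]) (by simp [hq₁])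
  have s₂ := summable_form ht q₂ (fun z => by
    rw [c₂]; constructor <;> nlinarith [sq_nonneg z.1, sq_nonneg z.2]) (by simp [hq₂])
  have H₁ := hasSum_fiber ht0 q₁ cnt (fun n => ⟨reps n, fun z => by
    rw [mem_reps, ← c₁]; norm_cast, rfl⟩) s₁
  have H₂ := hasSum_fiber ht0 q₂ (fun n => cnt (2 * n)) (fun n =>
    ⟨(reps (2 * n)).image (fun z => (z.1 / 2, z.2)), fun z => by
      rw [Finset.mem_image, ← Nat.cast_inj (R := ℤ), c₂]
      constructor
      · rintro ⟨⟨x, y⟩, h, rfl⟩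
        rw [mem_reps] at h
        push_cast at h
        obtain ⟨u, rfl⟩ := even_fst h
        simp only [Int.mul_ediv_cancel_left _ (two_ne_zero (α := ℤ))] at h ⊢
        linarith
      · intro h
        refine ⟨(2 * z.1, z.2), mem_reps.2 ?_, by simp⟩
        push_cast
        linarith, by
      refine Finset.card_image_of_injOn ?_
      rintro ⟨x, y⟩ h ⟨x', y'⟩ h' he
      have e := mem_reps.1 h
      have e' := mem_reps.1 h'
      push_cast at e e'
      obtain ⟨u, rfl⟩ := even_fst e
      obtain ⟨u', rfl⟩ := even_fst e'
      simpa using he⟩) s₂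
  -- the zero vector contributes `1 / 0 ^ t - 1 / 0 ^ t = 0`, so the sum may run over all of `ℤ²`
  have hR : ∑' p : {p : ℤ × ℤ // p ≠ 0},
        (1 / (((p : ℤ × ℤ).1 : ℂ) ^ 2 + 6 * ((p : ℤ × ℤ).2 : ℂ) ^ 2) ^ t -
          1 / (2 * ((p : ℤ × ℤ).1 : ℂ) ^ 2 + 3 * ((p : ℤ × ℤ).2 : ℂ) ^ 2) ^ t) =
      ∑' z, (1 / (q₁ z : ℂ) ^ t - 1 / (q₂ z : ℂ) ^ t) := by
    rw [← tsum_subtype_eq_of_support_subset (s := {p : ℤ × ℤ | p ≠ 0})]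
    · refine tsum_congr fun z => ?_
      have e₁ := congrArg (Int.cast : ℤ → ℂ) (c₁ z)
      have e₂ := congrArg (Int.cast : ℤ → ℂ) (c₂ z)
      push_cast at e₁ e₂
      rw [e₁, e₂]
    · rintro z hz rfl
      exact hz (by simp [hq₁, hq₂])
  rw [hR, s₁.tsum_sub s₂, dirichletL_eq (by simp [chi8]), dirichletL_eq (by simp [chiNeg3]),
    mul_assoc, ← LSeries_convolution' (chi8_summable ht) (chiNeg3_summable ht),
    ← (H₁.sub H₂).tsum_eq, LSeries, ← tsum_mul_left]
  refine tsum_congr fun n => ?_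
  simp only [LSeries.term_def]
  split_ifs with h
  · simp
  · rw [← sub_div, LSeries.convolution_def]
    have := reprDiff_eq n h
    rw [reprDiff, chiConv] at this
    rw [this, mul_div_assoc]
end
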